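/- Let K be a convex body in ℝ^n (n ≥ 2) with 0 in its interior such that either the barycenter of K is at the origin or the barycenter of the polar body K° is at the origin. Then there exists an absolute constant C > 0 such that for every 1 ≤ k ≤ n−1 and every k-dimensional linear subspace H of ℝ^n, vrad(P_H(K)) · vrad(K° ∩ H) ≤ (n/k)·C·(log n)^3. -/

import Mathlib

open MeasureTheory Metric Set
open scoped ENNReal RealInnerProductSpace Pointwise

noncomputable section

/-- The polar body of `K`. -/
def polarBody {n : ℕ} (K : Set (EuclideanSpace ℝ (Fin n))) : Set (EuclideanSpace ℝ (Fin n)) :=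
  {x | ∀ y ∈ K, ⟪x, y⟫ ≤ 1}

/-- The orthogonal projection of a set onto a subspace, viewed inside the ambient space. -/
def projSet {n : ℕ} (H : Submodule ℝ (EuclideanSpace ℝ (Fin n)))
    (A : Set (EuclideanSpace ℝ (Fin n))) : Set (EuclideanSpace ℝ (Fin n)) :=
  (fun x => (Submodule.orthogonalProjectionOnto H x : EuclideanSpace ℝ (Fin n))) '' A

/-- The volume radius of a subset of a `k`-dimensional subspace `H`: the `k`-th root of the
ratio of its `k`-dimensional (Hausdorff) volume to that of the unit ball of `H`. -/
def vrad {n : ℕ} (k : ℕ) (H : Submodule ℝ (EuclideanSpace ℝ (Fin n)))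
    (A : Set (EuclideanSpace ℝ (Fin n))) : ℝ≥0∞ :=
  (μH[(k : ℝ)] A / μH[(k : ℝ)] (closedBall (0 : EuclideanSpace ℝ (Fin n)) 1 ∩ (H : Set _)))
    ^ ((k : ℝ)⁻¹)

/-!
The functional Santaló inequality `∫ f * ∫ g ≤ (2 * π) ^ k` on a `k`-dimensional space, valid once
`f` is suitably centered, follows Lehec: induct on the dimension, cut `f` in half by a hyperplane,
and apply Prékopa–Leindler in the multiplicative form on the half-line to the marginals.

Write `ℝⁿ` as `Hᗮ × H`. If `K` is centered, take for `f` the volumes of the fibers of `K` over `H`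
and for `g` the indicator of `k • (K° ∩ H)`. Since `K` is convex, its volume is at least
`vol (P_H K)` times the largest fiber times `t ^ k * (1 - t) ^ (n - k)`, and the fiber cancels.
If `K°` is centered, take for `f` the indicator of `k • P_H K`, whose center `z` need not be `0`.
Jensen's inequality, after subtracting the slope of a supporting hyperplane of a log-concave
marginal, still bounds `vol (K°)` by the integral of `exp ⟪z, ·⟫` over `K° ∩ H` times
`vol (P_{Hᗮ} K°)`, and convexity gives the matching lower bound for `vol (K°)`. In both cases
`t = k / n` produces the factor `n / k`.
-/

lemma exists_measurePreserving_real_prod_equiv {V W : Type*}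
    [NormedAddCommGroup V] [InnerProductSpace ℝ V] [FiniteDimensional ℝ V]
    [MeasurableSpace V] [BorelSpace V]
    [NormedAddCommGroup W] [InnerProductSpace ℝ W] [FiniteDimensional ℝ W]
    [MeasurableSpace W] [BorelSpace W] (h : Module.finrank ℝ V = Module.finrank ℝ W + 1) :
    ∃ e : (ℝ × W) ≃L[ℝ] V, MeasurePreserving e ∧
      ∀ p q, ⟪e p, e q⟫ = p.1 * q.1 + ⟪p.2, q.2⟫ := by
  have hdim : Module.finrank ℝ (WithLp 2 (ℝ × W)) = Module.finrank ℝ V := by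
    rw [(WithLp.linearEquiv 2 ℝ (ℝ × W)).finrank_eq, Module.finrank_prod, Module.finrank_self, h,
      add_comm]
  let isometry : WithLp 2 (ℝ × W) ≃ₗᵢ[ℝ] V :=
    (stdOrthonormalBasis ℝ (WithLp 2 (ℝ × W))).equiv (stdOrthonormalBasis ℝ V) (finCongr hdim)
  refine ⟨(WithLp.prodContinuousLinearEquiv 2 ℝ ℝ W).symm.trans isometry.toContinuousLinearEquiv,
    isometry.measurePreserving.comp (WithLp.volume_preserving_toLp ℝ W), fun p q => ?_⟩
  simp [mul_comm]

section BrunnMinkowski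

variable {A B : Set ℝ}

lemma volume_add_volume_le_volume_add_of_isCompact (hA : IsCompact A) (hB : IsCompact B)
    (hA₀ : A.Nonempty) (hB₀ : B.Nonempty) : volume A + volume B ≤ volume (A + B) := by
  -- The translates `min B + A` and `max A + B` lie in `A + B` and meet only at `max A + min B`.
  obtain ⟨a, ha, le_a⟩ := hA.exists_isGreatest hA₀
  obtain ⟨b, hb, b_le⟩ := hB.exists_isLeast hB₀
  have hmeas : MeasurableSet ((fun x => a + x) '' B) := (hB.image (by fun_prop)).measurableSet
  have hdisj : AEDisjoint volume ((fun x => b + x) '' A) ((fun x => a + x) '' B) := by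
    refine measure_mono_null (t := {a + b}) ?_ (by simp)
    rintro x ⟨⟨p, hp, rfl⟩, ⟨q, hq, hqp⟩⟩
    have := le_a hp
    have := b_le hq
    simp only [mem_singleton_iff] at *
    linarith
  calc volume A + volume B
      = volume ((fun x => b + x) '' A) + volume ((fun x => a + x) '' B) := by simp
    _ = volume ((fun x => b + x) '' A ∪ (fun x => a + x) '' B) :=
        (measure_union₀ hmeas.nullMeasurableSet hdisj).symm
    _ ≤ volume (A + B) := by
        refine measure_mono (union_subset ?_ ?_)
        · rintro _ ⟨p, hp, rfl⟩
          exact ⟨p, hp, b, hb, add_comm p b⟩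
        · rintro _ ⟨q, hq, rfl⟩
          exact add_mem_add ha hq

lemma volume_add_volume_le_volume_add (hA : MeasurableSet A) (hB : MeasurableSet B)
    (hA₀ : A.Nonempty) (hB₀ : B.Nonempty) : volume A + volume B ≤ volume (A + B) := by
  obtain ⟨a₀, ha₀⟩ := hA₀
  obtain ⟨b₀, hb₀⟩ := hB₀
  have le_of_compact (S T : Set ℝ) (hSA : S ⊆ A) (hS : IsCompact S) (hTB : T ⊆ B)
      (hT : IsCompact T) : volume S + volume T ≤ volume (A + B) :=
    calc volume S + volume T ≤ volume (insert a₀ S) + volume (insert b₀ T) := by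
          gcongr <;> exact subset_insert _ _
      _ ≤ volume (insert a₀ S + insert b₀ T) :=
          volume_add_volume_le_volume_add_of_isCompact (hS.insert _) (hT.insert _)
            (insert_nonempty _ _) (insert_nonempty _ _)
      _ ≤ volume (A + B) := by gcongr <;> exact insert_subset ‹_› ‹_›
  rw [hA.measure_eq_iSup_isCompact, hB.measure_eq_iSup_isCompact]
  simp only [iSup_and']
  exact ENNReal.biSup_add_biSup_le' ⟨∅, empty_subset _, isCompact_empty⟩
    ⟨∅, empty_subset _, isCompact_empty⟩ fun S hS T hT => le_of_compact S T hS.1 hS.2 hT.1 hT.2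

lemma volume_smul_add_smul_ge {θ : ℝ} (hθ₀ : 0 < θ) (hθ₁ : θ < 1) (hA : MeasurableSet A)
    (hB : MeasurableSet B) (hA₀ : A.Nonempty) (hB₀ : B.Nonempty) :
    ENNReal.ofReal (1 - θ) * volume A + ENNReal.ofReal θ * volume B ≤
      volume ((1 - θ) • A + θ • B) := by
  have hθ : 0 < 1 - θ := sub_pos.2 hθ₁
  have := volume_add_volume_le_volume_add (hA.const_smul_of_ne_zero hθ.ne')
    (hB.const_smul_of_ne_zero hθ₀.ne') hA₀.smul_set hB₀.smul_set
  simpa [Measure.addHaar_smul, abs_of_pos hθ₀, abs_of_pos hθ] using this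

end BrunnMinkowski

section PrekopaLeindler

lemma lintegral_eq_lintegral_measure_ofReal_lt {X : Type*} [MeasurableSpace X] {μ : Measure X}
    {f : X → ℝ≥0∞} (hf : Measurable f) (hf_top : ∀ x, f x ≠ ⊤) :
    ∫⁻ x, f x ∂μ = ∫⁻ t in Ioi (0 : ℝ), μ {x | ENNReal.ofReal t < f x} := by
  have layer_cake := lintegral_eq_lintegral_meas_lt μ (f := fun x => (f x).toReal)
    (Filter.Eventually.of_forall fun x => ENNReal.toReal_nonneg) hf.ennreal_toReal.aemeasurable
  simp only [ENNReal.ofReal_toReal (hf_top _)] at layer_cake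
  rw [layer_cake]
  refine setLIntegral_congr_fun measurableSet_Ioi fun t ht => ?_
  simp only [ENNReal.ofReal_lt_iff_lt_toReal (mem_Ioi.1 ht).le (hf_top _)]

lemma rpow_mul_rpow_le_add {θ : ℝ} (hθ₀ : 0 < θ) (hθ₁ : θ < 1) (a b : ℝ≥0∞) :
    a ^ (1 - θ) * b ^ θ ≤ ENNReal.ofReal (1 - θ) * a + ENNReal.ofReal θ * b := by
  have hθ : 0 < 1 - θ := sub_pos.2 hθ₁
  rcases eq_or_ne a ⊤ with rfl | ha
  · simp [ENNReal.mul_top, hθ₁]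
  rcases eq_or_ne b ⊤ with rfl | hb
  · simp [ENNReal.mul_top, hθ₀]
  lift a to NNReal using ha
  lift b to NNReal using hb
  have amgm := ENNReal.ofReal_le_ofReal <|
    Real.geom_mean_le_arith_mean2_weighted hθ.le hθ₀.le a.2 b.2 (by ring)
  rw [ENNReal.ofReal_mul (Real.rpow_nonneg a.2 _),
    ENNReal.ofReal_add (mul_nonneg hθ.le a.2) (mul_nonneg hθ₀.le b.2),
    ENNReal.ofReal_mul hθ.le, ENNReal.ofReal_mul hθ₀.le,
    ← ENNReal.ofReal_rpow_of_nonneg a.2 hθ.le, ← ENNReal.ofReal_rpow_of_nonneg b.2 hθ₀.le] at amgm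
  simpa using amgm

variable {θ : ℝ} {f g h : ℝ → ℝ≥0∞}

lemma lintegral_add_lintegral_le_of_iSup_eq_one (hθ₀ : 0 < θ) (hθ₁ : θ < 1)
    (hf : Measurable f) (hg : Measurable g) (hh : Measurable h)
    (hf₁ : ⨆ x, f x = 1) (hg₁ : ⨆ x, g x = 1)
    (hfgh : ∀ x y, min (f x) (g y) ≤ h ((1 - θ) * x + θ * y)) :
    ENNReal.ofReal (1 - θ) * (∫⁻ x, f x) + ENNReal.ofReal θ * (∫⁻ x, g x) ≤ ∫⁻ x, h x := by
  have le_one {u : ℝ → ℝ≥0∞} (hu : ⨆ x, u x = 1) (x : ℝ) : u x ≤ 1 := hu ▸ le_iSup u x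
  have measurable_levels (u : ℝ → ℝ≥0∞) :
      Measurable fun t : ℝ => volume {x | ENNReal.ofReal t < u x} :=
    Antitone.measurable fun s t hst => measure_mono fun x hx =>
      (ENNReal.ofReal_le_ofReal hst).trans_lt hx
  refine le_trans ?_ (lintegral_mono fun x => min_le_left (h x) 1)
  rw [lintegral_eq_lintegral_measure_ofReal_lt hf fun x => ((le_one hf₁ x).trans_lt (by simp)).ne,
    lintegral_eq_lintegral_measure_ofReal_lt hg fun x => ((le_one hg₁ x).trans_lt (by simp)).ne,
    lintegral_eq_lintegral_measure_ofReal_lt (hh.min measurable_const)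
      fun x => ((min_le_right _ _).trans_lt (by simp)).ne,
    ← lintegral_const_mul _ (measurable_levels f), ← lintegral_const_mul _ (measurable_levels g),
    ← lintegral_add_left ((measurable_levels f).const_mul _)]
  refine lintegral_mono fun t => ?_
  rcases lt_or_ge (ENNReal.ofReal t) 1 with ht | ht
  · have nonempty_level {u : ℝ → ℝ≥0∞} (hu : ⨆ x, u x = 1) :
        {x | ENNReal.ofReal t < u x}.Nonempty :=
      lt_iSup_iff.1 (ht.trans_eq hu.symm)
    refine (volume_smul_add_smul_ge hθ₀ hθ₁ (measurableSet_lt measurable_const hf)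
      (measurableSet_lt measurable_const hg) (nonempty_level hf₁)
      (nonempty_level hg₁)).trans (measure_mono ?_)
    rintro _ ⟨_, ⟨x, hx, rfl⟩, _, ⟨y, hy, rfl⟩, rfl⟩
    exact lt_min ((lt_min hx hy).trans_le (hfgh x y)) ht
  · have empty_level {u : ℝ → ℝ≥0∞} (hu : ⨆ x, u x = 1) : {x | ENNReal.ofReal t < u x} = ∅ :=
      eq_empty_of_forall_notMem fun x hx => (hx.trans_le (le_one hu x)).not_ge ht
    simp [empty_level hf₁, empty_level hg₁]

lemma rpow_div_mul_rpow_div {a b : ℝ≥0∞} (hθ₀ : 0 < θ) (hθ₁ : θ < 1) (ha : a ≠ ⊤) (hb : b ≠ ⊤)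
    (u v : ℝ≥0∞) :
    (u / a) ^ (1 - θ) * (v / b) ^ θ = u ^ (1 - θ) * v ^ θ / (a ^ (1 - θ) * b ^ θ) := by
  have hθ : 0 < 1 - θ := sub_pos.2 hθ₁
  rw [ENNReal.div_rpow_of_nonneg _ _ hθ.le, ENNReal.div_rpow_of_nonneg _ _ hθ₀.le]
  simp only [div_eq_mul_inv]
  rw [ENNReal.mul_inv (.inr (ENNReal.rpow_ne_top_of_nonneg hθ₀.le hb))
    (.inl (ENNReal.rpow_ne_top_of_nonneg hθ.le ha)), mul_mul_mul_comm]

lemma min_le_rpow_mul_rpow (hθ₀ : 0 < θ) (hθ₁ : θ < 1) (a b : ℝ≥0∞) :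
    min a b ≤ a ^ (1 - θ) * b ^ θ := by
  have hθ : 0 < 1 - θ := sub_pos.2 hθ₁
  calc min a b = min a b ^ (1 - θ) * min a b ^ θ := by
        rw [← ENNReal.rpow_add_of_nonneg _ _ hθ.le hθ₀.le, sub_add_cancel, ENNReal.rpow_one]
    _ ≤ a ^ (1 - θ) * b ^ θ := by
        gcongr
        exacts [min_le_left a b, min_le_right a b]

lemma rpow_lintegral_mul_rpow_lintegral_le_of_iSup_ne_top (hθ₀ : 0 < θ) (hθ₁ : θ < 1)
    (hf : Measurable f) (hg : Measurable g) (hh : Measurable h)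
    (hf_top : ⨆ x, f x ≠ ⊤) (hg_top : ⨆ x, g x ≠ ⊤)
    (hfgh : ∀ x y, f x ^ (1 - θ) * g y ^ θ ≤ h ((1 - θ) * x + θ * y)) :
    (∫⁻ x, f x) ^ (1 - θ) * (∫⁻ x, g x) ^ θ ≤ ∫⁻ x, h x := by
  have hθ : 0 < 1 - θ := sub_pos.2 hθ₁
  set a := ⨆ x, f x
  set b := ⨆ x, g x
  rcases eq_or_ne a 0 with ha | ha
  · simp [show ∀ x, f x = 0 by simpa [a] using ha, hθ]
  rcases eq_or_ne b 0 with hb | hb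
  · simp [show ∀ x, g x = 0 by simpa [b] using hb, hθ₀]
  set c := a ^ (1 - θ) * b ^ θ
  have hc : c ≠ 0 := by simp [c, ha, hb, hf_top, hg_top]
  have hc_top : c ≠ ⊤ := ENNReal.mul_ne_top (ENNReal.rpow_ne_top_of_nonneg hθ.le hf_top)
    (ENNReal.rpow_ne_top_of_nonneg hθ₀.le hg_top)
  have normalized : (∫⁻ x, f x / a) ^ (1 - θ) * (∫⁻ x, g x / b) ^ θ ≤ ∫⁻ x, h x / c :=
    (rpow_mul_rpow_le_add hθ₀ hθ₁ _ _).trans <|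
      lintegral_add_lintegral_le_of_iSup_eq_one hθ₀ hθ₁ (hf.div_const a) (hg.div_const b)
        (hh.div_const c) (by rw [← ENNReal.iSup_div, ENNReal.div_self ha hf_top])
        (by rw [← ENNReal.iSup_div, ENNReal.div_self hb hg_top]) fun x y =>
        calc min (f x / a) (g y / b) ≤ (f x / a) ^ (1 - θ) * (g y / b) ^ θ :=
              min_le_rpow_mul_rpow hθ₀ hθ₁ _ _
          _ = f x ^ (1 - θ) * g y ^ θ / c := rpow_div_mul_rpow_div hθ₀ hθ₁ hf_top hg_top _ _
          _ ≤ h ((1 - θ) * x + θ * y) / c := by gcongr; exact hfgh x y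
  have lintegral_div {u : ℝ → ℝ≥0∞} (hu : Measurable u) (d : ℝ≥0∞) :
      ∫⁻ x, u x / d = (∫⁻ x, u x) / d := by
    simp only [div_eq_mul_inv, lintegral_mul_const _ hu]
  rw [lintegral_div hf, lintegral_div hg, lintegral_div hh,
    rpow_div_mul_rpow_div hθ₀ hθ₁ hf_top hg_top] at normalized
  rwa [ENNReal.div_le_iff hc hc_top, ENNReal.div_mul_cancel hc hc_top] at normalized

/-- The Prékopa–Leindler inequality as a property of a measure on a real vector space. -/
def PrekopaLeindler {X : Type*} [AddCommGroup X] [Module ℝ X] [MeasurableSpace X]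
    (μ : Measure X) : Prop :=
  ∀ ⦃θ : ℝ⦄, 0 < θ → θ < 1 → ∀ ⦃f g h : X → ℝ≥0∞⦄, Measurable f → Measurable g → Measurable h →
    (∀ x y, f x ^ (1 - θ) * g y ^ θ ≤ h ((1 - θ) • x + θ • y)) →
    (∫⁻ x, f x ∂μ) ^ (1 - θ) * (∫⁻ x, g x ∂μ) ^ θ ≤ ∫⁻ x, h x ∂μ

lemma tendsto_lintegral_min_natCast {X : Type*} [MeasurableSpace X] {μ : Measure X}
    {f : X → ℝ≥0∞} (hf : Measurable f) :
    Filter.Tendsto (fun n : ℕ => ∫⁻ x, min (f x) n ∂μ) Filter.atTop (nhds (∫⁻ x, f x ∂μ)) := by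
  refine lintegral_tendsto_of_tendsto_of_monotone (fun n => (hf.min measurable_const).aemeasurable)
    (ae_of_all _ fun x m n hmn => min_le_min_left _ (by exact_mod_cast hmn))
    (ae_of_all _ fun x => ?_)
  simpa using tendsto_const_nhds.min ENNReal.tendsto_nat_nhds_top

lemma prekopaLeindler_real : PrekopaLeindler (volume : Measure ℝ) := by
  intro θ hθ₀ hθ₁ f g h hf hg hh hfgh
  have hθ : 0 < 1 - θ := sub_pos.2 hθ₁
  have truncated (n : ℕ) :
      (∫⁻ x, min (f x) n) ^ (1 - θ) * (∫⁻ x, min (g x) n) ^ θ ≤ ∫⁻ x, h x := by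
    have iSup_ne_top (u : ℝ → ℝ≥0∞) : ⨆ x, min (u x) (n : ℝ≥0∞) ≠ ⊤ :=
      ne_top_of_le_ne_top (ENNReal.natCast_ne_top n) (iSup_le fun x => min_le_right _ _)
    refine rpow_lintegral_mul_rpow_lintegral_le_of_iSup_ne_top hθ₀ hθ₁ (hf.min measurable_const)
      (hg.min measurable_const) hh (iSup_ne_top f) (iSup_ne_top g) fun x y => ?_
    exact le_trans (by gcongr <;> exact min_le_left _ _) (hfgh x y)
  rcases eq_or_ne (∫⁻ x, f x) 0 with hf₀ | hf₀
  · simp [hf₀, hθ]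
  rcases eq_or_ne (∫⁻ x, g x) 0 with hg₀ | hg₀
  · simp [hg₀, hθ₀]
  refine le_of_tendsto (ENNReal.Tendsto.mul ((tendsto_lintegral_min_natCast hf).ennrpow_const _)
    (.inl ?_) ((tendsto_lintegral_min_natCast hg).ennrpow_const _) (.inl ?_))
    (Filter.Eventually.of_forall truncated)
  · simp [ENNReal.rpow_eq_zero_iff, hf₀, hθ.not_gt]
  · simp [ENNReal.rpow_eq_zero_iff, hg₀, hθ₀.not_gt]

lemma PrekopaLeindler.real_prod {X : Type*} [AddCommGroup X] [Module ℝ X] [MeasurableSpace X]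
    {μ : Measure X} [SFinite μ] (hμ : PrekopaLeindler μ) :
    PrekopaLeindler ((volume : Measure ℝ).prod μ) := by
  intro θ hθ₀ hθ₁ f g h hf hg hh hfgh
  rw [lintegral_prod _ hf.aemeasurable, lintegral_prod _ hg.aemeasurable,
    lintegral_prod _ hh.aemeasurable]
  exact prekopaLeindler_real hθ₀ hθ₁ hf.lintegral_prod_right' hg.lintegral_prod_right'
    hh.lintegral_prod_right' fun s t => hμ hθ₀ hθ₁ (by fun_prop) (by fun_prop) (by fun_prop)
      fun x y => hfgh (s, x) (t, y)

lemma PrekopaLeindler.of_linearEquiv {X Y : Type*} [AddCommGroup X] [Module ℝ X]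
    [MeasurableSpace X] [AddCommGroup Y] [Module ℝ Y] [MeasurableSpace Y] {μ : Measure X}
    {ν : Measure Y} (hμ : PrekopaLeindler μ) (e : X ≃ₗ[ℝ] Y) (he : MeasurePreserving e μ ν) :
    PrekopaLeindler ν := by
  intro θ hθ₀ hθ₁ f g h hf hg hh hfgh
  rw [← he.lintegral_comp hf, ← he.lintegral_comp hg, ← he.lintegral_comp hh]
  refine hμ hθ₀ hθ₁ (hf.comp he.measurable) (hg.comp he.measurable) (hh.comp he.measurable)
    fun x y => ?_
  simpa only [map_add, map_smul] using hfgh (e x) (e y)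

lemma prekopaLeindler_euclideanSpace :
    ∀ n : ℕ, PrekopaLeindler (volume : Measure (EuclideanSpace ℝ (Fin n)))
  | 0 => by
    intro θ _ _ f g h _ _ _ hfgh
    simp only [volume_euclideanSpace_eq_dirac, lintegral_dirac]
    simpa using hfgh 0 0
  | n + 1 => by
    obtain ⟨e, he, -⟩ := exists_measurePreserving_real_prod_equiv
      (W := EuclideanSpace ℝ (Fin n)) (V := EuclideanSpace ℝ (Fin (n + 1))) (by simp)
    exact (prekopaLeindler_euclideanSpace n).real_prod.of_linearEquiv e.toLinearEquiv he

lemma prekopaLeindler_volume (V : Type*) [NormedAddCommGroup V] [InnerProductSpace ℝ V]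
    [FiniteDimensional ℝ V] [MeasurableSpace V] [BorelSpace V] :
    PrekopaLeindler (volume : Measure V) :=
  (prekopaLeindler_euclideanSpace _).of_linearEquiv
    (stdOrthonormalBasis ℝ V).repr.symm.toLinearEquiv
    (stdOrthonormalBasis ℝ V).measurePreserving_repr_symm

end PrekopaLeindler

section HalfLine

lemma setLIntegral_Ioi_eq_lintegral_exp_mul (u : ℝ → ℝ≥0∞) :
    ∫⁻ s in Ioi (0 : ℝ), u s = ∫⁻ x : ℝ, ENNReal.ofReal (Real.exp x) * u (Real.exp x) := by
  simpa [image_univ, Real.range_exp] using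
    lintegral_image_eq_lintegral_abs_deriv_mul (s := univ) (f := Real.exp) (f' := Real.exp)
      MeasurableSet.univ (fun x _ => (Real.hasDerivAt_exp x).hasDerivWithinAt)
      Real.exp_injective.injOn u

lemma setLIntegral_Ioi_gaussian :
    ∫⁻ s in Ioi (0 : ℝ), ENNReal.ofReal (Real.exp (-(1 / 2) * s ^ 2)) =
      ENNReal.ofReal √(Real.pi / 2) := by
  rw [← ofReal_integral_eq_lintegral_ofReal
    (integrable_exp_neg_mul_sq (by norm_num)).integrableOn
    (Filter.Eventually.of_forall fun x => (Real.exp_pos _).le), integral_gaussian_Ioi]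
  congr 1
  rw [show Real.pi / (1 / 2) = 2 ^ 2 * (Real.pi / 2) by ring, Real.sqrt_mul (by positivity),
    Real.sqrt_sq zero_le_two]
  ring

lemma lintegral_Ioi_mul_lintegral_Ioi_le_sq {u w v : ℝ → ℝ≥0∞} (hu : Measurable u)
    (hw : Measurable w) (hv : Measurable v)
    (huwv : ∀ s t : ℝ, 0 < s → 0 < t → u s * w t ≤ v √(s * t) ^ 2) :
    (∫⁻ s in Ioi (0 : ℝ), u s) * (∫⁻ s in Ioi (0 : ℝ), w s) ≤ (∫⁻ s in Ioi (0 : ℝ), v s) ^ 2 := by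
  -- Under `s = exp x` geometric means become arithmetic means.
  have geometric_mean (x y : ℝ) : √(Real.exp x * Real.exp y) =
      Real.exp ((1 - 2⁻¹ : ℝ) • x + (2⁻¹ : ℝ) • y) := by
    rw [← Real.exp_add, ← Real.exp_half, smul_eq_mul, smul_eq_mul]
    ring_nf
  have ofReal_geometric_mean (x y : ℝ) : ENNReal.ofReal (Real.exp x) * ENNReal.ofReal (Real.exp y) =
      ENNReal.ofReal √(Real.exp x * Real.exp y) ^ 2 := by
    rw [← ENNReal.ofReal_pow (Real.sqrt_nonneg _), Real.sq_sqrt (by positivity),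
      ENNReal.ofReal_mul (Real.exp_pos x).le]
  have half : (1 - 2⁻¹ : ℝ) = 2⁻¹ := by norm_num
  simp only [setLIntegral_Ioi_eq_lintegral_exp_mul]
  rw [← ENNReal.rpow_two, ← ENNReal.rpow_inv_le_iff two_pos,
    ENNReal.mul_rpow_of_nonneg _ _ (by norm_num)]
  nth_rewrite 1 [← half]
  refine prekopaLeindler_real (by norm_num) (by norm_num) (by fun_prop) (by fun_prop) (by fun_prop)
    fun x y => ?_
  rw [← geometric_mean, half, ← ENNReal.mul_rpow_of_nonneg _ _ (by norm_num),
    ENNReal.rpow_inv_le_iff two_pos, ENNReal.rpow_two, mul_pow, mul_mul_mul_comm,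
    ofReal_geometric_mean]
  gcongr
  exact huwv _ _ (Real.exp_pos x) (Real.exp_pos y)

lemma lintegral_Ioi_mul_lintegral_Ioi_le_pi_div_two {u w : ℝ → ℝ≥0∞} (hu : Measurable u)
    (hw : Measurable w) {A : ℝ≥0∞}
    (huw : ∀ s t : ℝ, 0 < s → 0 < t → u s * w t ≤ A * ENNReal.ofReal (Real.exp (-(s * t)))) :
    (∫⁻ s in Ioi (0 : ℝ), u s) * (∫⁻ s in Ioi (0 : ℝ), w s) ≤
      A * ENNReal.ofReal (Real.pi / 2) := by
  have sq_rpow_half : (A ^ (2⁻¹ : ℝ)) ^ 2 = A := by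
    rw [← ENNReal.rpow_two, ENNReal.rpow_inv_rpow two_ne_zero]
  refine (lintegral_Ioi_mul_lintegral_Ioi_le_sq hu hw
    (v := fun s => A ^ (2⁻¹ : ℝ) * ENNReal.ofReal (Real.exp (-(1 / 2) * s ^ 2))) (by fun_prop)
    fun s t hs ht => (huw s t hs ht).trans_eq ?_).trans_eq ?_
  · rw [mul_pow, sq_rpow_half, ← ENNReal.ofReal_pow (Real.exp_pos _).le, ← Real.exp_nat_mul,
      Real.sq_sqrt (by positivity)]
    ring_nf
  · rw [lintegral_const_mul _ (by fun_prop), setLIntegral_Ioi_gaussian, mul_pow, sq_rpow_half,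
      ← ENNReal.ofReal_pow (Real.sqrt_nonneg _), Real.sq_sqrt (by positivity)]

end HalfLine

lemma measurePreserving_withDensity_comp {X Y : Type*} [MeasurableSpace X] [MeasurableSpace Y]
    {μ : Measure X} {ν : Measure Y} {φ : X → Y} (hφ : MeasurePreserving φ μ ν) {f : Y → ℝ≥0∞}
    (hf : Measurable f) :
    MeasurePreserving φ (μ.withDensity fun x => f (φ x)) (ν.withDensity f) := by
  refine ⟨hφ.measurable, Measure.ext fun s hs => ?_⟩
  rw [Measure.map_apply hφ.measurable hs, withDensity_apply _ (hφ.measurable hs),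
    withDensity_apply _ hs, hφ.setLIntegral_comp_preimage hs hf]

lemma setIntegral_preimage_comp {X Y F : Type*} [MeasurableSpace X] [MeasurableSpace Y]
    [NormedAddCommGroup F] [NormedSpace ℝ F] {μ : Measure X} {ν : Measure Y} {φ : X → Y}
    (hφ : MeasurePreserving φ μ ν) {s : Set Y} (hs : MeasurableSet s) {k : Y → F}
    (hk : StronglyMeasurable k) : ∫ x in φ ⁻¹' s, k (φ x) ∂μ = ∫ y in s, k y ∂ν := by
  have hφs := hφ.restrict_preimage hs
  rw [← hφs.map_eq, integral_map hφs.measurable.aemeasurable hk.aestronglyMeasurable]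

lemma map_snd_withDensity_prod_restrict {X Y : Type*} [MeasurableSpace X] [MeasurableSpace Y]
    {μ : Measure X} {ν : Measure Y} [SFinite μ] [SFinite ν] {f : X × Y → ℝ≥0∞}
    (hf : Measurable f) {s : Set X} (hs : MeasurableSet s) :
    (((μ.prod ν).withDensity f).restrict (Prod.fst ⁻¹' s)).map Prod.snd =
      ν.withDensity fun y => ∫⁻ x in s, f (x, y) ∂μ := by
  ext t ht
  have inter_eq : Prod.snd ⁻¹' t ∩ Prod.fst ⁻¹' s = s ×ˢ t := by ext; simp [and_comm]
  rw [Measure.map_apply measurable_snd ht, Measure.restrict_apply (measurable_snd ht), inter_eq,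
    withDensity_apply _ (hs.prod ht), withDensity_apply _ ht, ← Measure.prod_restrict,
    lintegral_prod_symm _ hf.aemeasurable]

lemma setLIntegral_fst_preimage {X Y : Type*} [MeasurableSpace X] [MeasurableSpace Y]
    {μ : Measure X} {ν : Measure Y} [SFinite μ] [SFinite ν] {f : X × Y → ℝ≥0∞}
    (hf : Measurable f) (s : Set X) :
    ∫⁻ p in Prod.fst ⁻¹' s, f p ∂μ.prod ν = ∫⁻ y, ∫⁻ x in s, f (x, y) ∂μ ∂ν := by
  rw [← prod_univ, ← Measure.prod_restrict, Measure.restrict_univ,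
    lintegral_prod_symm _ hf.aemeasurable]

lemma setLIntegral_prod_mul {X Y : Type*} [MeasurableSpace X] [MeasurableSpace Y] {μ : Measure X}
    {ν : Measure Y} [SFinite ν] {U : Set (X × Y)} (hU : MeasurableSet U) {f : Y → ℝ≥0∞}
    (hf : Measurable f) {g : X → ℝ≥0∞} (hg : Measurable g) :
    ∫⁻ p in U, f p.2 * g p.1 ∂μ.prod ν = ∫⁻ x, (∫⁻ y in Prod.mk x ⁻¹' U, f y ∂ν) * g x ∂μ := by
  rw [← lintegral_indicator hU, lintegral_prod _ (by fun_prop (disch := exact hU))]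
  refine lintegral_congr fun x => ?_
  rw [← lintegral_mul_const _ hf, ← lintegral_indicator (measurable_prodMk_left hU)]
  rfl

/-- `f` is the density of a finite, compactly supported measure. For such densities all moments
exist, so barycenters and exponential moments are meaningful. -/
structure IsCompactDensity {X : Type*} [MeasureSpace X] [TopologicalSpace X]
    (f : X → ℝ≥0∞) : Prop where
  measurable : Measurable f
  lintegral_ne_top : ∫⁻ x, f x ≠ ⊤
  exists_isCompact : ∃ K, IsCompact K ∧ Function.support f ⊆ K

namespace IsCompactDensity

variable {X Y : Type*} [MeasureSpace X] [TopologicalSpace X] [MeasureSpace Y] [TopologicalSpace Y]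
  {f : X → ℝ≥0∞}

lemma indicator_one [IsFiniteMeasureOnCompacts (volume : Measure X)] {s K : Set X}
    (hs : MeasurableSet s) (hK : IsCompact K) (hsK : s ⊆ K) :
    IsCompactDensity (s.indicator 1) where
  measurable := measurable_one.indicator hs
  lintegral_ne_top := by
    rw [lintegral_indicator_one hs]
    exact measure_ne_top_of_subset hsK hK.measure_lt_top.ne
  exists_isCompact := ⟨K, hK, support_indicator_subset.trans hsK⟩

lemma comp (hf : IsCompactDensity f) {φ : Y → X} (hφ : MeasurePreserving φ) {ψ : X → Y}
    (hψ : Continuous ψ) (hψφ : Function.LeftInverse ψ φ) :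
    IsCompactDensity fun y => f (φ y) where
  measurable := hf.measurable.comp hφ.measurable
  lintegral_ne_top := by
    rw [hφ.lintegral_comp hf.measurable]
    exact hf.lintegral_ne_top
  exists_isCompact := by
    obtain ⟨K, hK, hfK⟩ := hf.exists_isCompact
    exact ⟨ψ '' K, hK.image hψ, fun y hy => ⟨φ y, hfK hy, hψφ y⟩⟩

lemma mul_ofReal [OpensMeasurableSpace X] (hf : IsCompactDensity f) {φ : X → ℝ}
    (hφ : Continuous φ) : IsCompactDensity fun x => f x * ENNReal.ofReal (φ x) := by
  obtain ⟨K, hK, hfK⟩ := hf.exists_isCompact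
  obtain ⟨C, hC⟩ := hK.exists_bound_of_continuousOn hφ.continuousOn
  refine ⟨hf.measurable.mul hφ.measurable.ennreal_ofReal, ?_, K, hK,
    (Function.support_mul_subset_left _ _).trans hfK⟩
  refine ne_top_of_le_ne_top (ENNReal.mul_ne_top hf.lintegral_ne_top ENNReal.ofReal_ne_top :
    (∫⁻ x, f x) * ENNReal.ofReal C ≠ ⊤) ?_
  rw [← lintegral_mul_const _ hf.measurable]
  refine lintegral_mono fun x => ?_
  rcases eq_or_ne (f x) 0 with hx | hx
  · simp [hx]
  · gcongr
    exact (le_abs_self _).trans (hC x (hfK hx))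

lemma isFiniteMeasure_withDensity (hf : IsCompactDensity f) :
    IsFiniteMeasure (volume.withDensity f) :=
  MeasureTheory.isFiniteMeasure_withDensity hf.lintegral_ne_top

lemma integrable_of_continuous [OpensMeasurableSpace X] {F : Type*} [NormedAddCommGroup F]
    [SecondCountableTopology F] (hf : IsCompactDensity f) {φ : X → F} (hφ : Continuous φ) :
    Integrable φ (volume.withDensity f) := by
  borelize F
  have := hf.isFiniteMeasure_withDensity
  obtain ⟨K, hK, hfK⟩ := hf.exists_isCompact
  obtain ⟨C, hC⟩ := hK.exists_bound_of_continuousOn hφ.continuousOn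
  refine Integrable.of_bound hφ.measurable.aestronglyMeasurable C ?_
  rw [ae_withDensity_iff hf.measurable]
  exact ae_of_all _ fun x hx => hC x (hfK hx)

lemma marginal {f : X × Y → ℝ≥0∞} [SFinite (volume : Measure X)] [SFinite (volume : Measure Y)]
    (hf : IsCompactDensity f) (s : Set X) : IsCompactDensity fun y => ∫⁻ x in s, f (x, y) where
  measurable := hf.measurable.lintegral_prod_left'
  lintegral_ne_top := by
    rw [← setLIntegral_fst_preimage hf.measurable]
    exact ne_top_of_le_ne_top hf.lintegral_ne_top (setLIntegral_le_lintegral _ _)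
  exists_isCompact := by
    obtain ⟨K, hK, hfK⟩ := hf.exists_isCompact
    refine ⟨Prod.snd '' K, hK.image continuous_snd, fun y hy => ?_⟩
    obtain ⟨x, hx⟩ : ∃ x, f (x, y) ≠ 0 := by
      by_contra! hzero
      exact hy (by simp [hzero])
    exact ⟨(x, y), hfK hx, rfl⟩

end IsCompactDensity

section Balancing

lemma continuous_measureReal_Iic (ρ : Measure ℝ) [IsFiniteMeasure ρ] [NullSingletonClass ρ] :
    Continuous fun x => ρ.real (Iic x) := by
  have eq_primitive (x : ℝ) : ρ.real (Iic x) = ρ.real (Iic 0) + ∫ _ in (0 : ℝ)..x, (1 : ℝ) ∂ρ := by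
    rw [← intervalIntegral.integral_Iic_sub_Iic (integrable_const 1).integrableOn
      (integrable_const 1).integrableOn]
    simp
  rw [funext eq_primitive]
  exact continuous_const.add
    (intervalIntegral.continuous_primitive (fun _ _ => intervalIntegrable_const) 0)

lemma exists_measure_Ioi_eq_and_measure_Iio_eq (ρ : Measure ℝ) [IsFiniteMeasure ρ]
    [NullSingletonClass ρ] : ∃ c, ρ (Ioi c) = ρ univ / 2 ∧ ρ (Iio c) = ρ univ / 2 := by
  rcases eq_zero_or_neZero ρ with rfl | hρ
  · simp
  have mass_pos : 0 < ρ.real univ := measureReal_univ_pos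
  have at_bot : Filter.Tendsto (fun x => ρ.real (Iic x)) Filter.atBot (nhds 0) := by
    have iInter_Iic : ⋂ x : ℝ, Iic x = ∅ := iInter_Iic_eq_empty_iff.2 (by simp [not_bddBelow_univ])
    have := tendsto_measure_iInter_atBot (μ := ρ) (s := fun x : ℝ => Iic x)
      (fun _ => measurableSet_Iic.nullMeasurableSet) monotone_Iic ⟨0, measure_ne_top _ _⟩
    rw [iInter_Iic, measure_empty] at this
    exact (ENNReal.tendsto_toReal ENNReal.zero_ne_top).comp this
  have at_top : Filter.Tendsto (fun x => ρ.real (Iic x)) Filter.atTop (nhds (ρ.real univ)) :=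
    (ENNReal.tendsto_toReal (measure_ne_top ρ univ)).comp (tendsto_measure_Iic_atTop ρ)
  obtain ⟨c, hc⟩ := mem_range_of_exists_le_of_exists_ge (continuous_measureReal_Iic ρ)
    ((at_bot.eventually_le_const (half_pos mass_pos)).exists)
    ((at_top.eventually_const_le (half_lt_self mass_pos)).exists)
  have mass_Iic : ρ (Iic c) = ρ univ / 2 := by
    rw [← ENNReal.toReal_eq_toReal_iff' (measure_ne_top _ _)
      (ENNReal.div_ne_top (measure_ne_top _ _) two_ne_zero), ENNReal.toReal_div]
    exact hc
  refine ⟨c, ?_, ?_⟩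
  · rw [← compl_Iic, measure_compl measurableSet_Iic (measure_ne_top _ _), mass_Iic,
      ENNReal.sub_half (measure_ne_top _ _)]
  · rw [measure_congr Iio_ae_eq_Iic, mass_Iic]

lemma exists_smul_add_smul_eq {V : Type*} [AddCommGroup V] [Module ℝ V] {m σ τ : ℝ} (hm : m ≠ 0)
    (hστ : σ ≠ τ) (x y : V) : ∃ a v : V, m • a + σ • v = x ∧ m • a + τ • v = y := by
  have hne : σ - τ ≠ 0 := sub_ne_zero.2 hστ
  refine ⟨m⁻¹ • (x - σ • (σ - τ)⁻¹ • (x - y)), (σ - τ)⁻¹ • (x - y), ?_, ?_⟩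
  · rw [smul_inv_smul₀ hm, sub_add_cancel]
  · rw [smul_inv_smul₀ hm, sub_add, ← sub_smul, smul_inv_smul₀ hne, sub_sub_cancel]

lemma setIntegral_pos_of_forall_mem_pos {X : Type*} [MeasurableSpace X] {μ : Measure X}
    {s : Set X} (hs : MeasurableSet s) (hμs : μ s ≠ 0) {φ : X → ℝ} (hφ : IntegrableOn φ s μ)
    (hpos : ∀ x ∈ s, 0 < φ x) : 0 < ∫ x in s, φ x ∂μ := by
  rw [setIntegral_pos_iff_support_of_nonneg_ae
    (ae_restrict_of_forall_mem hs fun x hx => (hpos x hx).le) hφ]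
  exact (pos_iff_ne_zero.2 hμs).trans_le (measure_mono fun x hx => ⟨(hpos x hx).ne', hx⟩)

variable {V : Type*} [NormedAddCommGroup V] [NormedSpace ℝ V] [CompleteSpace V]
  [MeasurableSpace V] {ρ : Measure (ℝ × V)} [IsFiniteMeasure ρ]

lemma setIntegral_snd_sub_sub_smul (hfst : Integrable Prod.fst ρ) (hsnd : Integrable Prod.snd ρ)
    (s : Set (ℝ × V)) (c : ℝ) (a v : V) :
    ∫ p in s, (p.2 - a - (p.1 - c) • v) ∂ρ =
      ∫ p in s, p.2 ∂ρ - (ρ.real s • a + (∫ p in s, (p.1 - c) ∂ρ) • v) := by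
  have hfst_sub : Integrable (fun p : ℝ × V => p.1 - c) (ρ.restrict s) :=
    hfst.restrict.sub (integrable_const c)
  have hsnd_sub : Integrable (fun p : ℝ × V => p.2 - a) (ρ.restrict s) :=
    hsnd.restrict.sub (integrable_const a)
  rw [integral_sub hsnd_sub (hfst_sub.smul_const v),
    integral_sub hsnd.restrict (integrable_const a), integral_smul_const, integral_const,
    measureReal_restrict_apply_univ, sub_sub]

lemma exists_balanced_hyperplane (hfst : Integrable Prod.fst ρ) (hsnd : Integrable Prod.snd ρ)
    (hnull : ∀ c, ρ (Prod.fst ⁻¹' {c}) = 0) :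
    ∃ (c : ℝ) (a v : V), ∀ s ∈ ({Prod.fst ⁻¹' Ioi c, Prod.fst ⁻¹' Iio c} : Set (Set (ℝ × V))),
      ρ s = ρ univ / 2 ∧ ∫ p in s, (p.2 - a - (p.1 - c) • v) ∂ρ = 0 := by
  rcases eq_zero_or_neZero ρ with rfl | hρ
  · simp
  have : NullSingletonClass (ρ.map Prod.fst) :=
    ⟨fun c => by rw [Measure.map_apply measurable_fst (measurableSet_singleton c), hnull c]⟩
  obtain ⟨c, mass_Ioi, mass_Iio⟩ := exists_measure_Ioi_eq_and_measure_Iio_eq (ρ.map Prod.fst)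
  rw [Measure.map_apply measurable_fst measurableSet_Ioi,
    Measure.map_apply measurable_fst .univ, preimage_univ] at mass_Ioi
  rw [Measure.map_apply measurable_fst measurableSet_Iio,
    Measure.map_apply measurable_fst .univ, preimage_univ] at mass_Iio
  have half_ne_zero : ρ univ / 2 ≠ 0 := by simp [NeZero.ne ρ]
  have hfst_sub : Integrable (fun p : ℝ × V => p.1 - c) ρ := hfst.sub (integrable_const c)
  have moment_Ioi : 0 < ∫ p in Prod.fst ⁻¹' Ioi c, (p.1 - c) ∂ρ :=
    setIntegral_pos_of_forall_mem_pos (measurable_fst measurableSet_Ioi)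
      (mass_Ioi ▸ half_ne_zero) hfst_sub.integrableOn fun p hp => sub_pos.2 hp
  have moment_Iio : ∫ p in Prod.fst ⁻¹' Iio c, (p.1 - c) ∂ρ < 0 := by
    rw [← neg_pos, ← integral_neg]
    exact setIntegral_pos_of_forall_mem_pos (measurable_fst measurableSet_Iio)
      (mass_Iio ▸ half_ne_zero) hfst_sub.neg.integrableOn fun p hp => neg_pos.2 (sub_neg.2 hp)
  obtain ⟨a, v, eq_Ioi, eq_Iio⟩ := exists_smul_add_smul_eq
    (ENNReal.toReal_ne_zero.2
      ⟨half_ne_zero, ENNReal.div_ne_top (measure_ne_top ρ univ) two_ne_zero⟩)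
    (moment_Iio.trans moment_Ioi).ne' (∫ p in Prod.fst ⁻¹' Ioi c, p.2 ∂ρ)
    (∫ p in Prod.fst ⁻¹' Iio c, p.2 ∂ρ)
  refine ⟨c, a, v, ?_⟩
  rintro s (rfl | rfl)
  · rw [setIntegral_snd_sub_sub_smul hfst hsnd, Measure.real, mass_Ioi, eq_Ioi, sub_self]
    exact ⟨rfl, rfl⟩
  · rw [setIntegral_snd_sub_sub_smul hfst hsnd, Measure.real, mass_Iio, eq_Iio, sub_self]
    exact ⟨rfl, rfl⟩

end Balancing

section Santalo

/-- The functional analogue, with respect to a pairing `B`, of `K` and `K°` being polar: the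
indicator functions of `K` and `K°` satisfy it up to the factor `e`. -/
def IsPolarPair {X : Type*} (B : X → X → ℝ) (f g : X → ℝ≥0∞) : Prop :=
  ∀ x y, f x * g y ≤ ENNReal.ofReal (Real.exp (-B x y))

/-- The functional Blaschke–Santaló inequality for the pairing `B`, with constant `c`: each
compactly supported density `f` has a center `z`, independent of its polar partner `g`, about
which the volume product of `f` and `g` is at most `c`. -/
def HasSantaloCenters {X : Type*} [AddCommGroup X] [MeasureSpace X] [TopologicalSpace X]
    (B : X → X → ℝ) (c : ℝ≥0∞) : Prop :=
  ∀ f : X → ℝ≥0∞, IsCompactDensity f → ∃ z, ∀ g : X → ℝ≥0∞, IsCompactDensity g →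
    IsPolarPair B (fun x => f (z + x)) g → (∫⁻ x, f x) * (∫⁻ y, g y) ≤ c

lemma measure_univ_le_lintegral_exp {X : Type*} [MeasurableSpace X] {τ : Measure X}
    [IsFiniteMeasure τ] {ψ : X → ℝ} (hψ : Integrable ψ τ) (hψ₀ : ∫ x, ψ x ∂τ = 0) :
    τ univ ≤ ∫⁻ x, ENNReal.ofReal (Real.exp (ψ x)) ∂τ := by
  have integrable_add_one : Integrable (fun x => ψ x + 1) τ := hψ.add (integrable_const 1)
  calc τ univ = ENNReal.ofReal (∫ x, (ψ x + 1) ∂τ) := by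
        rw [integral_add hψ (integrable_const 1), hψ₀]
        simp
    _ ≤ ENNReal.ofReal (∫⁻ x, ENNReal.ofReal (ψ x + 1) ∂τ).toReal := by
        rw [integral_eq_lintegral_pos_part_sub_lintegral_neg_part integrable_add_one]
        exact ENNReal.ofReal_le_ofReal (sub_le_self _ ENNReal.toReal_nonneg)
    _ ≤ ∫⁻ x, ENNReal.ofReal (ψ x + 1) ∂τ := ENNReal.ofReal_toReal_le
    _ ≤ ∫⁻ x, ENNReal.ofReal (Real.exp (ψ x)) ∂τ := by
        gcongr with x
        exact Real.add_one_le_exp (ψ x)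

variable {V : Type*} [NormedAddCommGroup V] [InnerProductSpace ℝ V]

/-- The scalar product of the orthogonal sum `ℝ ⊕ V`; `ℝ × V` itself carries the sup norm and
hence no inner product. -/
def prodInner (p q : ℝ × V) : ℝ := p.1 * q.1 + ⟪p.2, q.2⟫

/-- The affine shear of `ℝ × V` in direction `v`, sending the origin to `(t, a)`. -/
def shear (t : ℝ) (a v : V) (q : ℝ × V) : ℝ × V := (t + q.1, a + q.2 + q.1 • v)

lemma prodInner_shear_dual_shear (v : V) (p q : ℝ × V) :
    prodInner (shear 0 0 v p) (q.1 - ⟪v, q.2⟫, q.2) = prodInner p q := by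
  simp only [prodInner, shear, inner_add_left, real_inner_smul_left, zero_add]
  ring

lemma add_shear_zero (t : ℝ) (a v : V) (q : ℝ × V) : (t, a) + shear 0 0 v q = shear t a v q := by
  simp [shear, add_assoc]

lemma leftInverse_shear (t : ℝ) (a v : V) :
    Function.LeftInverse (fun p => (p.1 - t, p.2 - a - (p.1 - t) • v)) (shear t a v) := fun q => by
  simp [shear, add_sub_right_comm]

variable [MeasurableSpace V] {f g : ℝ × V → ℝ≥0∞}

lemma IsPolarPair.marginal (hf : Measurable f) (hg : Measurable g)
    (hfg : IsPolarPair prodInner f g) (x y : V) :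
    (∫⁻ s in Ioi (0 : ℝ), f (s, x)) * (∫⁻ s in Ioi (0 : ℝ), g (s, y)) ≤
      ENNReal.ofReal (Real.pi / 2) * ENNReal.ofReal (Real.exp (-⟪x, y⟫)) := by
  rw [mul_comm (ENNReal.ofReal (Real.pi / 2))]
  refine lintegral_Ioi_mul_lintegral_Ioi_le_pi_div_two (by fun_prop) (by fun_prop)
    fun s t _ _ => (hfg (s, x) (t, y)).trans_eq ?_
  rw [prodInner, ← ENNReal.ofReal_mul (Real.exp_pos _).le, ← Real.exp_add, neg_add_rev]

variable [FiniteDimensional ℝ V] [BorelSpace V] {c : ℝ≥0∞}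

lemma HasSantaloCenters.lintegral_mul_lintegral_le
    (hc : HasSantaloCenters (inner ℝ : V → V → ℝ) c) {f g : V → ℝ≥0∞} (hf : IsCompactDensity f)
    (hg : IsCompactDensity g) (hf₀ : ∫ x, x ∂volume.withDensity f = 0)
    (hfg : IsPolarPair (inner ℝ) f g) : (∫⁻ x, f x) * (∫⁻ y, g y) ≤ c := by
  -- Tilting `f` by `exp ⟪x, z⟫` moves the center of `g` to `z` and, by Jensen, adds mass to `f`.
  obtain ⟨z, hz⟩ := hc g hg
  have := hf.isFiniteMeasure_withDensity
  have lintegral_le_tilted : ∫⁻ x, f x ≤ ∫⁻ x, f x * ENNReal.ofReal (Real.exp ⟪x, z⟫) := by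
    have inner_eq_zero : ∫ x, ⟪x, z⟫ ∂volume.withDensity f = 0 := by
      simp only [real_inner_comm z]
      rw [integral_inner (f := fun x => x) (hf.integrable_of_continuous continuous_id), hf₀,
        inner_zero_right]
    have := measure_univ_le_lintegral_exp
      (hf.integrable_of_continuous (by fun_prop)) inner_eq_zero
    rwa [withDensity_apply _ .univ, setLIntegral_univ,
      lintegral_withDensity_eq_lintegral_mul _ hf.measurable (by fun_prop)] at this
  have tilted_polar : IsPolarPair (inner ℝ) (fun y => g (z + y))
      (fun x => f x * ENNReal.ofReal (Real.exp ⟪x, z⟫)) := fun y x =>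
    calc g (z + y) * (f x * ENNReal.ofReal (Real.exp ⟪x, z⟫))
        = f x * g (z + y) * ENNReal.ofReal (Real.exp ⟪x, z⟫) := by ring
      _ ≤ ENNReal.ofReal (Real.exp (-⟪x, z + y⟫)) * ENNReal.ofReal (Real.exp ⟪x, z⟫) := by
          gcongr
          exact hfg x (z + y)
      _ = ENNReal.ofReal (Real.exp (-⟪y, x⟫)) := by
          rw [← ENNReal.ofReal_mul (Real.exp_pos _).le, ← Real.exp_add, inner_add_right,
            real_inner_comm x y]
          ring_nf
  calc (∫⁻ x, f x) * (∫⁻ y, g y)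
      ≤ (∫⁻ y, g y) * ∫⁻ x, f x * ENNReal.ofReal (Real.exp ⟪x, z⟫) := by
        rw [mul_comm]
        gcongr
    _ ≤ c := hz _ (hf.mul_ofReal (by fun_prop)) tilted_polar

lemma HasSantaloCenters.lintegral_mul_lintegral_le_mul
    (hc : HasSantaloCenters (inner ℝ : V → V → ℝ) c) {f g : V → ℝ≥0∞} (hf : IsCompactDensity f)
    (hg : IsCompactDensity g) (hf₀ : ∫ x, x ∂volume.withDensity f = 0) {d : ℝ≥0∞} (hd₀ : d ≠ 0)
    (hd : d ≠ ⊤) (hfg : ∀ x y, f x * g y ≤ d * ENNReal.ofReal (Real.exp (-⟪x, y⟫))) :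
    (∫⁻ x, f x) * (∫⁻ y, g y) ≤ d * c := by
  have ofReal_inv : ENNReal.ofReal d⁻¹.toReal = d⁻¹ :=
    ENNReal.ofReal_toReal (ENNReal.inv_ne_top.2 hd₀)
  have polar : IsPolarPair (inner ℝ) f fun y => g y * ENNReal.ofReal d⁻¹.toReal := fun x y => by
    rw [ofReal_inv, ← mul_assoc, ← div_eq_mul_inv]
    exact ENNReal.div_le_of_le_mul' (hfg x y)
  have := hc.lintegral_mul_lintegral_le hf (hg.mul_ofReal continuous_const) hf₀ polar
  rwa [lintegral_mul_const _ hg.measurable, ofReal_inv, ← mul_assoc, ← div_eq_mul_inv,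
    ENNReal.div_le_iff hd₀ hd, mul_comm c] at this

lemma HasSantaloCenters.setLIntegral_fst_Ioi_mul_le
    (hc : HasSantaloCenters (inner ℝ : V → V → ℝ) c)
    (hf : IsCompactDensity f) (hg : IsCompactDensity g)
    (hf₀ : ∫ p in Prod.fst ⁻¹' Ioi 0, p.2 ∂volume.withDensity f = 0)
    (hfg : IsPolarPair prodInner f g) :
    (∫⁻ p in Prod.fst ⁻¹' Ioi 0, f p) * (∫⁻ p in Prod.fst ⁻¹' Ioi 0, g p) ≤
      ENNReal.ofReal (Real.pi / 2) * c := by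
  have centered : ∫ x, x ∂volume.withDensity (fun x => ∫⁻ s in Ioi (0 : ℝ), f (s, x)) = 0 := by
    rw [← map_snd_withDensity_prod_restrict hf.measurable measurableSet_Ioi,
      integral_map (f := fun x => x) measurable_snd.aemeasurable aestronglyMeasurable_id]
    exact hf₀
  rw [Measure.volume_eq_prod, setLIntegral_fst_preimage hf.measurable,
    setLIntegral_fst_preimage hg.measurable]
  exact hc.lintegral_mul_lintegral_le_mul (hf.marginal _) (hg.marginal _) centered
    (by simp [Real.pi_pos]) ENNReal.ofReal_ne_top (hfg.marginal hf.measurable hg.measurable)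

lemma measurePreserving_neg_fst : MeasurePreserving fun p : ℝ × V => (-p.1, p.2) :=
  (Measure.measurePreserving_neg volume).prod (MeasurePreserving.id volume)

lemma HasSantaloCenters.setLIntegral_fst_Iio_mul_le
    (hc : HasSantaloCenters (inner ℝ : V → V → ℝ) c)
    (hf : IsCompactDensity f) (hg : IsCompactDensity g)
    (hf₀ : ∫ p in Prod.fst ⁻¹' Iio 0, p.2 ∂volume.withDensity f = 0)
    (hfg : IsPolarPair prodInner f g) :
    (∫⁻ p in Prod.fst ⁻¹' Iio 0, f p) * (∫⁻ p in Prod.fst ⁻¹' Iio 0, g p) ≤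
      ENNReal.ofReal (Real.pi / 2) * c := by
  have hσ := measurePreserving_neg_fst (V := V)
  have preimage_Iio : (fun p : ℝ × V => (-p.1, p.2)) ⁻¹' (Prod.fst ⁻¹' Iio 0) =
      Prod.fst ⁻¹' Ioi 0 := by ext; simp
  have measurable_Iio : MeasurableSet (Prod.fst ⁻¹' Iio 0 : Set (ℝ × V)) :=
    measurable_fst measurableSet_Iio
  have continuous_σ : Continuous fun p : ℝ × V => (-p.1, p.2) := by fun_prop
  have σσ : Function.LeftInverse (fun p : ℝ × V => (-p.1, p.2)) fun p => (-p.1, p.2) :=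
    fun p => by simp
  have centered : ∫ p in Prod.fst ⁻¹' Ioi 0, p.2
      ∂volume.withDensity (fun p : ℝ × V => f (-p.1, p.2)) = 0 := by
    rw [← preimage_Iio, ← hf₀]
    exact setIntegral_preimage_comp (measurePreserving_withDensity_comp hσ hf.measurable)
      measurable_Iio measurable_snd.stronglyMeasurable
  have := hc.setLIntegral_fst_Ioi_mul_le (hf.comp hσ continuous_σ σσ)
    (hg.comp hσ continuous_σ σσ) centered
    fun p q => (hfg (-p.1, p.2) (-q.1, q.2)).trans_eq (by simp [prodInner])
  rwa [← preimage_Iio, hσ.setLIntegral_comp_preimage measurable_Iio hf.measurable,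
    hσ.setLIntegral_comp_preimage measurable_Iio hg.measurable] at this

lemma lintegral_eq_setLIntegral_fst_Ioi_add_Iio (g : ℝ × V → ℝ≥0∞) :
    ∫⁻ p, g p = (∫⁻ p in Prod.fst ⁻¹' Ioi 0, g p) + ∫⁻ p in Prod.fst ⁻¹' Iio 0, g p := by
  rw [← lintegral_add_compl g (measurable_fst measurableSet_Ioi), ← preimage_compl, compl_Ioi]
  congr 1
  exact setLIntegral_congr (Measure.quasiMeasurePreserving_fst.preimage_ae_eq Iio_ae_eq_Iic.symm)

lemma HasSantaloCenters.lintegral_mul_lintegral_le_of_balanced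
    (hc : HasSantaloCenters (inner ℝ : V → V → ℝ) c)
    (hf : IsCompactDensity f) (hg : IsCompactDensity g)
    (hbal : ∀ s ∈ ({Prod.fst ⁻¹' Ioi 0, Prod.fst ⁻¹' Iio 0} : Set (Set (ℝ × V))),
      ∫⁻ p in s, f p = (∫⁻ p, f p) / 2 ∧ ∫ p in s, p.2 ∂volume.withDensity f = 0)
    (hfg : IsPolarPair prodInner f g) :
    (∫⁻ p, f p) * (∫⁻ p, g p) ≤ c * ENNReal.ofReal (2 * Real.pi) := by
  obtain ⟨mass_Ioi, bary_Ioi⟩ := hbal _ (mem_insert _ _)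
  obtain ⟨mass_Iio, bary_Iio⟩ := hbal _ (mem_insert_of_mem _ rfl)
  have le_Ioi := hc.setLIntegral_fst_Ioi_mul_le hf hg bary_Ioi hfg
  have le_Iio := hc.setLIntegral_fst_Iio_mul_le hf hg bary_Iio hfg
  rw [mass_Ioi] at le_Ioi
  rw [mass_Iio] at le_Iio
  calc (∫⁻ p, f p) * (∫⁻ p, g p)
      = 2 * ((∫⁻ p, f p) / 2 * (∫⁻ p in Prod.fst ⁻¹' Ioi 0, g p) +
          (∫⁻ p, f p) / 2 * ∫⁻ p in Prod.fst ⁻¹' Iio 0, g p) := by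
        rw [← mul_add, ← lintegral_eq_setLIntegral_fst_Ioi_add_Iio, ← mul_assoc,
          ENNReal.mul_div_cancel (by simp) (by simp)]
    _ ≤ 2 * (ENNReal.ofReal (Real.pi / 2) * c + ENNReal.ofReal (Real.pi / 2) * c) := by gcongr
    _ = c * ENNReal.ofReal (2 * Real.pi) := by
        rw [← add_mul, mul_comm c, ← mul_assoc,
          ← ENNReal.ofReal_add (by positivity) (by positivity), ← ENNReal.ofReal_ofNat 2,
          ← ENNReal.ofReal_mul (by norm_num), add_halves]

lemma measurePreserving_shear (t : ℝ) (a v : V) : MeasurePreserving (shear t a v) := by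
  refine (measurePreserving_add_left volume t).skew_product (g := fun s x => a + x + s • v)
    (by fun_prop) (Filter.Eventually.of_forall fun s => ?_)
  simp only [add_right_comm a _ (s • v)]
  exact (measurePreserving_add_left volume (a + s • v)).map_eq

lemma measurePreserving_dual_shear (v : V) :
    MeasurePreserving fun q : ℝ × V => (q.1 - ⟪v, q.2⟫, q.2) := by
  have swapped : MeasurePreserving fun q : V × ℝ => (q.1, q.2 - ⟪v, q.1⟫) :=
    (MeasurePreserving.id volume).skew_product (g := fun y t => t - ⟪v, y⟫) (by fun_prop)
      (Filter.Eventually.of_forall fun y => (measurePreserving_sub_right volume ⟪v, y⟫).map_eq)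
  exact (Measure.measurePreserving_swap.comp swapped).comp Measure.measurePreserving_swap

lemma IsCompactDensity.exists_balanced_comp_shear (hf : IsCompactDensity f) :
    ∃ (t : ℝ) (a v : V),
      ∀ s ∈ ({Prod.fst ⁻¹' Ioi 0, Prod.fst ⁻¹' Iio 0} : Set (Set (ℝ × V))),
        ∫⁻ q in s, f (shear t a v q) = (∫⁻ q, f (shear t a v q)) / 2 ∧
          ∫ q in s, q.2 ∂volume.withDensity (fun q => f (shear t a v q)) = 0 := by
  set ρ := volume.withDensity f
  have := hf.isFiniteMeasure_withDensity
  have null_vertical (t : ℝ) : ρ (Prod.fst ⁻¹' {t}) = 0 :=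
    withDensity_absolutelyContinuous _ _
      (Measure.quasiMeasurePreserving_fst.preimage_null Real.volume_singleton)
  obtain ⟨t, a, v, balanced⟩ := exists_balanced_hyperplane (ρ := ρ)
    (hf.integrable_of_continuous continuous_fst) (hf.integrable_of_continuous continuous_snd)
    null_vertical
  have hΦ := measurePreserving_shear t a v
  have pull_back {s : Set (ℝ × V)} (hs : MeasurableSet s) (hmass : ρ s = ρ univ / 2)
      (hbary : ∫ p in s, (p.2 - a - (p.1 - t) • v) ∂ρ = 0) :
      ∫⁻ q in shear t a v ⁻¹' s, f (shear t a v q) = (∫⁻ q, f (shear t a v q)) / 2 ∧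
        ∫ q in shear t a v ⁻¹' s, q.2 ∂volume.withDensity (fun q => f (shear t a v q)) = 0 := by
    constructor
    · rw [hΦ.setLIntegral_comp_preimage hs hf.measurable, hΦ.lintegral_comp hf.measurable,
        ← withDensity_apply _ hs, hmass, withDensity_apply _ .univ, setLIntegral_univ]
    · rw [← hbary, ← setIntegral_preimage_comp
        (measurePreserving_withDensity_comp hΦ hf.measurable) hs (by fun_prop)]
      simp [shear, add_sub_right_comm]
  have preimage_Ioi : shear t a v ⁻¹' (Prod.fst ⁻¹' Ioi t) = Prod.fst ⁻¹' Ioi 0 := by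
    ext; simp [shear]
  have preimage_Iio : shear t a v ⁻¹' (Prod.fst ⁻¹' Iio t) = Prod.fst ⁻¹' Iio 0 := by
    ext; simp [shear]
  obtain ⟨mass_Ioi, bary_Ioi⟩ := balanced _ (mem_insert _ _)
  obtain ⟨mass_Iio, bary_Iio⟩ := balanced _ (mem_insert_of_mem _ rfl)
  refine ⟨t, a, v, ?_⟩
  rintro s (rfl | rfl)
  · exact preimage_Ioi ▸ pull_back (measurable_fst measurableSet_Ioi) mass_Ioi bary_Ioi
  · exact preimage_Iio ▸ pull_back (measurable_fst measurableSet_Iio) mass_Iio bary_Iio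

lemma HasSantaloCenters.real_prod (hc : HasSantaloCenters (inner ℝ : V → V → ℝ) c) :
    HasSantaloCenters (prodInner : ℝ × V → ℝ × V → ℝ) (c * ENNReal.ofReal (2 * Real.pi)) := by
  -- A shear centers both halves of `f` in `V`; the dual shear of `g` restores the pairing.
  intro f hf
  obtain ⟨t, a, v, balanced⟩ := hf.exists_balanced_comp_shear
  have hΦ := measurePreserving_shear t a v
  have hΨ := measurePreserving_dual_shear v
  refine ⟨(t, a), fun g hg hfg => ?_⟩
  rw [← hΦ.lintegral_comp hf.measurable, ← hΨ.lintegral_comp hg.measurable]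
  refine hc.lintegral_mul_lintegral_le_of_balanced
    (hf.comp hΦ (by fun_prop) (leftInverse_shear t a v))
    (hg.comp hΨ (ψ := fun p => (p.1 + ⟪v, p.2⟫, p.2)) (by fun_prop) fun q => by simp)
    balanced fun p q => ?_
  rw [← prodInner_shear_dual_shear v, ← add_shear_zero]
  exact hfg _ _

lemma HasSantaloCenters.of_linearEquiv {X Y : Type*} [AddCommGroup X] [Module ℝ X]
    [MeasureSpace X] [TopologicalSpace X] [AddCommGroup Y] [Module ℝ Y] [MeasureSpace Y]
    [TopologicalSpace Y] {B : X → X → ℝ} {B' : Y → Y → ℝ} (hc : HasSantaloCenters B c)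
    (e : X ≃L[ℝ] Y) (he : MeasurePreserving e) (hB : ∀ x y, B' (e x) (e y) = B x y) :
    HasSantaloCenters B' c := by
  have comp_e {f : Y → ℝ≥0∞} (hf : IsCompactDensity f) : IsCompactDensity fun x => f (e x) :=
    hf.comp he e.symm.continuous e.symm_apply_apply
  intro f hf
  obtain ⟨z, hz⟩ := hc _ (comp_e hf)
  refine ⟨e z, fun g hg hfg => ?_⟩
  rw [← he.lintegral_comp hf.measurable, ← he.lintegral_comp hg.measurable]
  refine hz _ (comp_e hg) fun x y => ?_
  simpa only [map_add, hB] using hfg (e x) (e y)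

lemma hasSantaloCenters_euclideanSpace : ∀ n : ℕ,
    HasSantaloCenters (inner ℝ : EuclideanSpace ℝ (Fin n) → EuclideanSpace ℝ (Fin n) → ℝ)
      (ENNReal.ofReal (2 * Real.pi) ^ n)
  | 0 => fun f _ => ⟨0, fun g _ hfg => by
      simpa [volume_euclideanSpace_eq_dirac] using hfg 0 0⟩
  | n + 1 => by
    obtain ⟨e, he, inner_e⟩ := exists_measurePreserving_real_prod_equiv
      (W := EuclideanSpace ℝ (Fin n)) (V := EuclideanSpace ℝ (Fin (n + 1))) (by simp)
    exact (hasSantaloCenters_euclideanSpace n).real_prod.of_linearEquiv e he inner_e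

lemma hasSantaloCenters_inner (V : Type*) [NormedAddCommGroup V] [InnerProductSpace ℝ V]
    [FiniteDimensional ℝ V] [MeasurableSpace V] [BorelSpace V] :
    HasSantaloCenters (inner ℝ : V → V → ℝ)
      (ENNReal.ofReal (2 * Real.pi) ^ Module.finrank ℝ V) :=
  (hasSantaloCenters_euclideanSpace _).of_linearEquiv
    (stdOrthonormalBasis ℝ V).repr.symm.toContinuousLinearEquiv
    (stdOrthonormalBasis ℝ V).measurePreserving_repr_symm
    (stdOrthonormalBasis ℝ V).repr.symm.inner_map_map

end Santalo

section RogersShephard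

variable {A B : Type*} [NormedAddCommGroup A] [NormedSpace ℝ A] [NormedAddCommGroup B]
  [NormedSpace ℝ B] [FiniteDimensional ℝ B] [MeasurableSpace B] [BorelSpace B] (β : Measure B)
  [β.IsAddHaarMeasure] {N : Set (A × B)} {t : ℝ}

lemma measure_preimage_mk_le_of_mem_homothety (hN : Convex ℝ N) (ht₀ : 0 ≤ t) (ht₁ : t ≤ 1)
    (a₀ : A) {a : A} (ha : a ∈ AffineMap.homothety a₀ t '' (Prod.fst '' N)) :
    ENNReal.ofReal ((1 - t) ^ Module.finrank ℝ B) * β (Prod.mk a₀ ⁻¹' N) ≤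
      β (Prod.mk a ⁻¹' N) := by
  obtain ⟨_, ⟨⟨a', b⟩, hab, rfl⟩, rfl⟩ := ha
  have one_sub_nonneg : 0 ≤ 1 - t := sub_nonneg.2 ht₁
  rw [← abs_of_nonneg (pow_nonneg one_sub_nonneg _), ← Measure.addHaar_image_homothety β b]
  refine measure_mono ?_
  rintro _ ⟨b', hb', rfl⟩
  simp only [AffineMap.homothety_eq_lineMap, AffineMap.lineMap_apply_module, sub_sub_cancel,
    add_comm _ (t • a')]
  exact hN hab hb' ht₀ one_sub_nonneg (by ring)

variable [FiniteDimensional ℝ A] [MeasurableSpace A] [BorelSpace A] (α : Measure A)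
  [α.IsAddHaarMeasure]

lemma measure_image_fst_mul_measure_preimage_mk_le (hN : IsCompact N) (hN' : Convex ℝ N)
    (ht₀ : 0 ≤ t) (ht₁ : t ≤ 1) (a₀ : A) :
    α (Prod.fst '' N) * β (Prod.mk a₀ ⁻¹' N) *
        ENNReal.ofReal (t ^ Module.finrank ℝ A * (1 - t) ^ Module.finrank ℝ B) ≤
      (α.prod β) N := by
  set I := AffineMap.homothety a₀ t '' (Prod.fst '' N) with hI
  have measure_I : α I = ENNReal.ofReal (t ^ Module.finrank ℝ A) * α (Prod.fst '' N) := by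
    rw [hI, Measure.addHaar_image_homothety, abs_of_nonneg (by positivity)]
  calc α (Prod.fst '' N) * β (Prod.mk a₀ ⁻¹' N) *
        ENNReal.ofReal (t ^ Module.finrank ℝ A * (1 - t) ^ Module.finrank ℝ B)
      = ∫⁻ _ in I, ENNReal.ofReal ((1 - t) ^ Module.finrank ℝ B) * β (Prod.mk a₀ ⁻¹' N) ∂α := by
        rw [setLIntegral_const, measure_I, ENNReal.ofReal_mul (by positivity)]
        ring
    _ ≤ ∫⁻ a in I, β (Prod.mk a ⁻¹' N) ∂α :=
        setLIntegral_mono (measurable_measure_prodMk_left hN.measurableSet) fun a ha =>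
          measure_preimage_mk_le_of_mem_homothety β hN' ht₀ ht₁ a₀ ha
    _ ≤ ∫⁻ a, β (Prod.mk a ⁻¹' N) ∂α := setLIntegral_le_lintegral _ _
    _ = (α.prod β) N := (Measure.prod_apply hN.measurableSet).symm

lemma measure_image_snd_mul_measure_preimage_mk_right_le (hN : IsCompact N) (hN' : Convex ℝ N)
    (ht₀ : 0 ≤ t) (ht₁ : t ≤ 1) (b₀ : B) :
    β (Prod.snd '' N) * α ((fun a => (a, b₀)) ⁻¹' N) *
        ENNReal.ofReal (t ^ Module.finrank ℝ B * (1 - t) ^ Module.finrank ℝ A) ≤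
      (α.prod β) N := by
  have compact_swap : IsCompact (Prod.swap '' N) := hN.image continuous_swap
  have convex_swap : Convex ℝ (Prod.swap '' N) :=
    hN'.is_linear_image ⟨fun _ _ => rfl, fun _ _ => rfl⟩
  have measure_swap : (β.prod α) (Prod.swap '' N) = (α.prod β) N := by
    rw [← Measure.prod_swap, Measure.map_apply measurable_swap compact_swap.measurableSet,
      preimage_image_eq _ Prod.swap_injective]
  have section_swap : Prod.mk b₀ ⁻¹' (Prod.swap '' N) = (fun a => (a, b₀)) ⁻¹' N := by ext; simp
  have := measure_image_fst_mul_measure_preimage_mk_le α β compact_swap convex_swap ht₀ ht₁ b₀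
  rwa [image_image, measure_swap, section_swap] at this

end RogersShephard

section LogConcave

/-- Log-concavity of a nonnegative function, allowing the values `0` and `∞`. -/
def IsLogConcave {E : Type*} [AddCommGroup E] [Module ℝ E] (f : E → ℝ≥0∞) : Prop :=
  ∀ ⦃θ : ℝ⦄, 0 < θ → θ < 1 → ∀ x y, f x ^ (1 - θ) * f y ^ θ ≤ f ((1 - θ) • x + θ • y)

lemma ofReal_exp_rpow_mul_rpow (a b s t : ℝ) :
    ENNReal.ofReal (Real.exp a) ^ s * ENNReal.ofReal (Real.exp b) ^ t =
      ENNReal.ofReal (Real.exp (s * a + t * b)) := by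
  rw [ENNReal.ofReal_rpow_of_pos (Real.exp_pos a), ENNReal.ofReal_rpow_of_pos (Real.exp_pos b),
    ← ENNReal.ofReal_mul (by positivity), ← Real.exp_mul, ← Real.exp_mul, ← Real.exp_add,
    mul_comm a, mul_comm b]

lemma isLogConcave_indicator_exp {E : Type*} [AddCommGroup E] [Module ℝ E] {N : Set E}
    (hN : Convex ℝ N) (ℓ : E →ₗ[ℝ] ℝ) :
    IsLogConcave (N.indicator fun x => ENNReal.ofReal (Real.exp (ℓ x))) := by
  intro θ hθ₀ hθ₁ x y
  by_cases hx : x ∈ N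
  · by_cases hy : y ∈ N
    · have hxy : (1 - θ) • x + θ • y ∈ N := hN hx hy (sub_pos.2 hθ₁).le hθ₀.le (by ring)
      rw [indicator_of_mem hx, indicator_of_mem hy, indicator_of_mem hxy,
        ofReal_exp_rpow_mul_rpow]
      simp
    · simp [hy, ENNReal.zero_rpow_of_pos hθ₀]
  · simp [hx, ENNReal.zero_rpow_of_pos (sub_pos.2 hθ₁)]

lemma IsLogConcave.lintegral_snd {W V : Type*} [AddCommGroup W] [Module ℝ W] [MeasurableSpace W]
    [AddCommGroup V] [Module ℝ V] [MeasurableSpace V] {μ : Measure V} (hμ : PrekopaLeindler μ)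
    {f : W × V → ℝ≥0∞} (hf : IsLogConcave f) (hf' : Measurable f) :
    IsLogConcave fun w => ∫⁻ y, f (w, y) ∂μ := fun _ hθ₀ hθ₁ w₁ w₂ =>
  hμ hθ₀ hθ₁ (by fun_prop) (by fun_prop) (by fun_prop)
    fun x y => hf hθ₀ hθ₁ (w₁, x) (w₂, y)

lemma lowerSemicontinuous_indicator_of_isOpen {E : Type*} [TopologicalSpace E] {N : Set E}
    (hN : IsOpen N) {f : E → ℝ≥0∞} (hf : Continuous f) : LowerSemicontinuous (N.indicator f) := by
  intro x a ha
  have hx : x ∈ N := mem_of_indicator_ne_zero (bot_le.trans_lt ha).ne'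
  rw [indicator_of_mem hx] at ha
  filter_upwards [hN.mem_nhds hx, hf.continuousAt.eventually_const_lt ha] with y hy hay
  rwa [indicator_of_mem hy]

lemma lowerSemicontinuous_lintegral_snd {W V : Type*} [TopologicalSpace W]
    [FirstCountableTopology W] [MeasurableSpace W] [TopologicalSpace V] [MeasurableSpace V]
    (μ : Measure V) {f : W × V → ℝ≥0∞} (hf : LowerSemicontinuous f) (hf' : Measurable f) :
    LowerSemicontinuous fun w => ∫⁻ y, f (w, y) ∂μ := by
  rw [lowerSemicontinuous_iff_le_liminf]
  intro w
  calc ∫⁻ y, f (w, y) ∂μ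
      ≤ ∫⁻ y, Filter.liminf (fun w' => f (w', y)) (nhds w) ∂μ :=
        lintegral_mono fun y => (hf.comp (Continuous.prodMk_left y)).le_liminf w
    _ ≤ Filter.liminf (fun w' => ∫⁻ y, f (w', y) ∂μ) (nhds w) :=
        lintegral_liminf_le fun w' => by fun_prop

lemma IsLogConcave.convex_hypograph_log {W : Type*} [AddCommGroup W] [Module ℝ W]
    {ψ : W → ℝ≥0∞} (hψ : IsLogConcave ψ) :
    Convex ℝ {p : W × ℝ | ENNReal.ofReal (Real.exp p.2) < ψ p.1} := by
  rw [convex_iff_forall_pos]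
  rintro ⟨w₁, r₁⟩ h₁ ⟨w₂, r₂⟩ h₂ a θ ha hθ₀ haθ
  obtain rfl : a = 1 - θ := eq_sub_of_add_eq haθ
  calc ENNReal.ofReal (Real.exp ((1 - θ) * r₁ + θ * r₂))
      = ENNReal.ofReal (Real.exp r₁) ^ (1 - θ) * ENNReal.ofReal (Real.exp r₂) ^ θ :=
        (ofReal_exp_rpow_mul_rpow ..).symm
    _ < ψ w₁ ^ (1 - θ) * ψ w₂ ^ θ :=
        ENNReal.mul_lt_mul (ENNReal.rpow_lt_rpow h₁ ha) (ENNReal.rpow_lt_rpow h₂ hθ₀)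
    _ ≤ ψ ((1 - θ) • w₁ + θ • w₂) := hψ hθ₀ (sub_pos.1 ha) w₁ w₂

lemma isOpen_hypograph_log {W : Type*} [TopologicalSpace W] {ψ : W → ℝ≥0∞}
    (hψ : LowerSemicontinuous ψ) :
    IsOpen {p : W × ℝ | ENNReal.ofReal (Real.exp p.2) < ψ p.1} := by
  have hcont : Continuous fun p : W × ℝ => (p.1, ENNReal.ofReal (Real.exp p.2)) :=
    continuous_fst.prodMk (ENNReal.continuous_ofReal.comp (by fun_prop))
  convert (hψ.isClosed_epigraph.preimage hcont).isOpen_compl using 1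
  ext
  simp

lemma IsLogConcave.exists_le_mul_exp {W : Type*} [NormedAddCommGroup W] [NormedSpace ℝ W]
    {ψ : W → ℝ≥0∞} (hψ : IsLogConcave ψ) (hψ' : LowerSemicontinuous ψ) (hψ₀ : ψ 0 ≠ 0)
    (hψ_top : ψ 0 ≠ ⊤) :
    ∃ ξ : W →L[ℝ] ℝ, ∀ w, ψ w ≤ ψ 0 * ENNReal.ofReal (Real.exp (ξ w)) := by
  -- `ξ` is the slope of a hyperplane separating `(0, log (ψ 0))` from the hypograph of `log ψ`.
  obtain ⟨r, hr⟩ : ∃ r, ENNReal.ofReal (Real.exp r) = ψ 0 :=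
    ⟨Real.log (ψ 0).toReal, by
      rw [Real.exp_log (ENNReal.toReal_pos hψ₀ hψ_top), ENNReal.ofReal_toReal hψ_top]⟩
  obtain ⟨f, hf⟩ := geometric_hahn_banach_open_point hψ.convex_hypograph_log
    (isOpen_hypograph_log hψ') (x := (0, r)) (by simp [hr])
  have apply_mk (w : W) (s : ℝ) : f (w, s) = f (w, 0) + s * f (0, 1) := by
    rw [← smul_eq_mul, ← map_smul, ← map_add]
    simp
  have slope_pos : 0 < f (0, 1) := by
    have : f (0, r - 1) < f (0, r) := hf (0, r - 1) (by
      rw [mem_ofPred_eq, ← hr, ENNReal.ofReal_lt_ofReal_iff (Real.exp_pos r)]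
      exact Real.exp_lt_exp.2 (sub_one_lt r))
    rw [apply_mk, apply_mk 0 r] at this
    linarith
  refine ⟨-(f (0, 1))⁻¹ • f.comp (.inl ℝ W ℝ), fun w => le_of_not_gt fun hw => ?_⟩
  rw [← hr, ← ENNReal.ofReal_mul (Real.exp_pos r).le, ← Real.exp_add] at hw
  refine (hf (w, _) hw).ne ?_
  rw [apply_mk w, apply_mk 0 r]
  simp only [smul_apply, ContinuousLinearMap.comp_apply,
    ContinuousLinearMap.inl_apply, smul_eq_mul, Prod.mk_zero_zero, map_zero]
  field_simp
  ring

variable {W V : Type*} [NormedAddCommGroup W] [NormedSpace ℝ W] [MeasurableSpace W]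
  [BorelSpace W] [NormedAddCommGroup V] [InnerProductSpace ℝ V] [FiniteDimensional ℝ V]
  [MeasurableSpace V] [BorelSpace V]

lemma exists_setLIntegral_exp_section_le_mul_exp {U : Set (W × V)} (hU : IsOpen U)
    (hU' : Convex ℝ U) (hU₀ : 0 ∈ U) (ℓ : V →L[ℝ] ℝ)
    (h_top : ∫⁻ y in Prod.mk 0 ⁻¹' U, ENNReal.ofReal (Real.exp (ℓ y)) ≠ ⊤) :
    ∃ ξ : W →L[ℝ] ℝ, ∀ w, ∫⁻ y in Prod.mk w ⁻¹' U, ENNReal.ofReal (Real.exp (ℓ y)) ≤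
      (∫⁻ y in Prod.mk 0 ⁻¹' U, ENNReal.ofReal (Real.exp (ℓ y))) *
        ENNReal.ofReal (Real.exp (ξ w)) := by
  set F : W × V → ℝ≥0∞ := U.indicator fun p => ENNReal.ofReal (Real.exp (ℓ p.2))
  have isOpen_section (w : W) : IsOpen (Prod.mk w ⁻¹' U) := hU.preimage (.prodMk_right w)
  have lintegral_F (w : W) :
      ∫⁻ y in Prod.mk w ⁻¹' U, ENNReal.ofReal (Real.exp (ℓ y)) = ∫⁻ y, F (w, y) :=
    (lintegral_indicator (isOpen_section w).measurableSet _).symm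
  have lsc_F : LowerSemicontinuous F := lowerSemicontinuous_indicator_of_isOpen hU
    (ENNReal.continuous_ofReal.comp (by fun_prop))
  have logConcave_F : IsLogConcave F :=
    isLogConcave_indicator_exp hU' (ℓ.toLinearMap ∘ₗ .snd ℝ W V)
  have ne_zero : ∫⁻ y in Prod.mk 0 ⁻¹' U, ENNReal.ofReal (Real.exp (ℓ y)) ≠ 0 := by
    have exp_pos : (Function.support fun y => ENNReal.ofReal (Real.exp (ℓ y))) = univ :=
      eq_univ_of_forall fun y => by simp [Real.exp_pos]
    rw [← pos_iff_ne_zero, setLIntegral_pos_iff (by fun_prop), exp_pos, univ_inter]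
    exact (isOpen_section 0).measure_pos _ ⟨0, hU₀⟩
  simp only [lintegral_F] at h_top ne_zero ⊢
  exact (logConcave_F.lintegral_snd (prekopaLeindler_volume V) lsc_F.measurable).exists_le_mul_exp
    (lowerSemicontinuous_lintegral_snd volume lsc_F lsc_F.measurable) ne_zero h_top

lemma isCompact_preimage_mk {X Y : Type*} [TopologicalSpace X] [TopologicalSpace Y] [T2Space X]
    [T2Space Y] {N : Set (X × Y)} (hN : IsCompact N) (x : X) : IsCompact (Prod.mk x ⁻¹' N) :=
  (hN.image continuous_snd).of_isClosed_subset (hN.isClosed.preimage (.prodMk_right x))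
    fun y hy => ⟨(x, y), hy, rfl⟩

lemma exists_setLIntegral_exp_interior_section_mul_le_indicator {N : Set (W × V)}
    (hN : IsCompact N) (hN' : Convex ℝ N) (hN₀ : 0 ∈ interior N) (ℓ : V →L[ℝ] ℝ) :
    ∃ ξ : W →L[ℝ] ℝ, ∀ w,
      (∫⁻ y in Prod.mk w ⁻¹' interior N, ENNReal.ofReal (Real.exp (ℓ y))) *
          ENNReal.ofReal (Real.exp (-ξ w)) ≤
        (Prod.fst '' N).indicator
          (fun _ => ∫⁻ y in Prod.mk 0 ⁻¹' N, ENNReal.ofReal (Real.exp (ℓ y))) w := by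
  have compact_section := isCompact_preimage_mk hN 0
  have section_subset : Prod.mk (0 : W) ⁻¹' interior N ⊆ Prod.mk 0 ⁻¹' N :=
    preimage_mono interior_subset
  obtain ⟨ξ, hξ⟩ := exists_setLIntegral_exp_section_le_mul_exp isOpen_interior hN'.interior hN₀ ℓ
    (ne_top_of_le_ne_top (setLIntegral_lt_top_of_isCompact compact_section.measure_lt_top.ne
      compact_section (continuous_real_toNNReal.comp (by fun_prop))).ne
      (lintegral_mono_set section_subset))
  refine ⟨ξ, fun w => ?_⟩
  by_cases hw : w ∈ Prod.fst '' N
  · rw [indicator_of_mem hw, Real.exp_neg, ENNReal.ofReal_inv_of_pos (Real.exp_pos _),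
      ← div_eq_mul_inv]
    exact ENNReal.div_le_of_le_mul ((hξ w).trans (by gcongr))
  · have : Prod.mk w ⁻¹' interior N = ∅ :=
      eq_empty_of_forall_notMem fun y hy => hw ⟨(w, y), interior_subset hy, rfl⟩
    simp [this]

end LogConcave

section FiberVolume

/-- The volume of the fiber of `K` over `y`; as a function of `y` this is the density of the
projection of the volume of `K` to the second factor. -/
def fiberVolume {X Y : Type*} [MeasureSpace X] (K : Set (X × Y)) (y : Y) : ℝ≥0∞ :=
  volume ((fun x => (x, y)) ⁻¹' K)

lemma iSup_fiberVolume_ne_top {X Y : Type*} [MeasureSpace X] [TopologicalSpace X]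
    [TopologicalSpace Y] [IsFiniteMeasureOnCompacts (volume : Measure X)] {K : Set (X × Y)}
    (hK : IsCompact K) : ⨆ y, fiberVolume K y ≠ ⊤ :=
  ne_top_of_le_ne_top (hK.image continuous_fst).measure_lt_top.ne
    (iSup_le fun y => measure_mono fun x hx => ⟨(x, y), hx, rfl⟩)

lemma fiberVolume_mul_indicator_le {W V : Type*} [MeasureSpace W] [NormedAddCommGroup V]
    [InnerProductSpace ℝ V] {r : ℝ} {K : Set (W × V)} {M : Set V}
    (hKM : ∀ p ∈ K, ∀ y ∈ M, ⟪p.2, y⟫ ≤ r) (x y : V) :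
    fiberVolume K x * M.indicator 1 y ≤
      (⨆ y, fiberVolume K y) * ENNReal.ofReal (Real.exp r) *
        ENNReal.ofReal (Real.exp (-⟪x, y⟫)) := by
  by_cases hy : y ∈ M
  · rcases eq_empty_or_nonempty ((fun w => (w, x)) ⁻¹' K) with hx | ⟨w, hw⟩
    · simp [fiberVolume, hx]
    · rw [mul_assoc, ← ENNReal.ofReal_mul (Real.exp_pos _).le, ← Real.exp_add,
        indicator_of_mem hy]
      gcongr
      · exact le_iSup (fiberVolume K) x
      · simpa using hKM _ hw y hy
  · simp [hy]

variable {X Y : Type*} [MeasureSpace X] [MeasureSpace Y] {K : Set (X × Y)}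

lemma fiberVolume_eq_lintegral (hK : MeasurableSet K) :
    fiberVolume K = fun y => ∫⁻ x in univ, K.indicator 1 (x, y) := by
  ext y
  rw [fiberVolume, ← lintegral_indicator_one (measurable_prodMk_right hK), ← setLIntegral_univ]
  rfl

variable [SFinite (volume : Measure X)] [SFinite (volume : Measure Y)]

lemma lintegral_fiberVolume (hK : MeasurableSet K) : ∫⁻ y, fiberVolume K y = volume K :=
  (Measure.prod_apply_symm hK).symm

lemma map_snd_volume_restrict (hK : MeasurableSet K) :
    (volume.restrict K).map Prod.snd = volume.withDensity (fiberVolume K) := by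
  rw [fiberVolume_eq_lintegral hK,
    ← map_snd_withDensity_prod_restrict (measurable_one.indicator hK) .univ, preimage_univ,
    Measure.restrict_univ, withDensity_indicator_one hK, Measure.volume_eq_prod]

lemma iSup_fiberVolume_ne_zero (hK : MeasurableSet K) (hK₀ : volume K ≠ 0) :
    ⨆ y, fiberVolume K y ≠ 0 := by
  contrapose! hK₀
  rw [← lintegral_fiberVolume hK, funext (ENNReal.iSup_eq_zero.1 hK₀), lintegral_zero]

lemma isCompactDensity_fiberVolume [TopologicalSpace X] [TopologicalSpace Y]
    [IsFiniteMeasureOnCompacts (volume : Measure X)]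
    [IsFiniteMeasureOnCompacts (volume : Measure Y)] (hK : IsCompact K)
    (hK' : MeasurableSet K) : IsCompactDensity (fiberVolume K) := by
  rw [fiberVolume_eq_lintegral hK']
  exact (IsCompactDensity.indicator_one hK' hK subset_rfl).marginal univ

end FiberVolume

section ProjectionSection

variable {W V : Type*} [NormedAddCommGroup W] [NormedSpace ℝ W] [FiniteDimensional ℝ W]
  [MeasureSpace W] [BorelSpace W] [(volume : Measure W).IsAddHaarMeasure] [NormedAddCommGroup V]
  [InnerProductSpace ℝ V] [FiniteDimensional ℝ V] [MeasurableSpace V] [BorelSpace V]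
  {r t : ℝ}

lemma volume_image_snd_mul_iSup_fiberVolume_le {K : Set (W × V)} (hK : IsCompact K)
    (hK' : Convex ℝ K) (ht₀ : 0 ≤ t) (ht₁ : t ≤ 1) :
    volume (Prod.snd '' K) * (⨆ y, fiberVolume K y) *
        ENNReal.ofReal (t ^ Module.finrank ℝ V * (1 - t) ^ Module.finrank ℝ W) ≤ volume K := by
  rw [ENNReal.mul_iSup, ENNReal.iSup_mul]
  exact iSup_le (measure_image_snd_mul_measure_preimage_mk_right_le volume volume hK hK' ht₀ ht₁)

lemma volume_mul_volume_le_iSup_fiberVolume_mul {K : Set (W × V)} (hK : IsCompact K)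
    (hK₀ : volume K ≠ 0) (centered : ∫ p in K, p.2 = 0) {M : Set V} (hM : IsCompact M)
    (hKM : ∀ p ∈ K, ∀ y ∈ M, ⟪p.2, y⟫ ≤ r) :
    volume K * volume M ≤ (⨆ y, fiberVolume K y) * ENNReal.ofReal (Real.exp r) *
      ENNReal.ofReal (2 * Real.pi) ^ Module.finrank ℝ V := by
  have fiberVolume_centered : ∫ y, y ∂volume.withDensity (fiberVolume K) = 0 := by
    rwa [← map_snd_volume_restrict hK.measurableSet,
      integral_map (f := fun y => y) measurable_snd.aemeasurable aestronglyMeasurable_id]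
  rw [← lintegral_fiberVolume hK.measurableSet, ← lintegral_indicator_one hM.measurableSet]
  exact (hasSantaloCenters_inner V).lintegral_mul_lintegral_le_mul
    (isCompactDensity_fiberVolume hK hK.measurableSet)
    (.indicator_one hM.measurableSet hM subset_rfl) fiberVolume_centered
    (mul_ne_zero (iSup_fiberVolume_ne_zero hK.measurableSet hK₀) (by simp [Real.exp_pos]))
    (ENNReal.mul_ne_top (iSup_fiberVolume_ne_top hK) ENNReal.ofReal_ne_top)
    (fiberVolume_mul_indicator_le hKM)

lemma volume_image_snd_mul_volume_le_of_centered {K : Set (W × V)} (hK : IsCompact K)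
    (hK' : Convex ℝ K) (hK₀ : volume K ≠ 0) (centered : ∫ p in K, p.2 = 0) {M : Set V}
    (hM : IsCompact M) (hKM : ∀ p ∈ K, ∀ y ∈ M, ⟪p.2, y⟫ ≤ r) (ht₀ : 0 ≤ t) (ht₁ : t ≤ 1) :
    volume (Prod.snd '' K) * volume M *
        ENNReal.ofReal (t ^ Module.finrank ℝ V * (1 - t) ^ Module.finrank ℝ W) ≤
      ENNReal.ofReal (Real.exp r) * ENNReal.ofReal (2 * Real.pi) ^ Module.finrank ℝ V := by
  set S := ⨆ y, fiberVolume K y with hS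
  set c := ENNReal.ofReal (t ^ Module.finrank ℝ V * (1 - t) ^ Module.finrank ℝ W)
  rw [← ENNReal.mul_le_mul_iff_right (iSup_fiberVolume_ne_zero hK.measurableSet hK₀)
    (iSup_fiberVolume_ne_top hK), ← hS]
  calc S * (volume (Prod.snd '' K) * volume M * c)
      = volume (Prod.snd '' K) * S * c * volume M := by ring
    _ ≤ volume K * volume M := by
        gcongr
        exact volume_image_snd_mul_iSup_fiberVolume_le hK hK' ht₀ ht₁
    _ ≤ S * ENNReal.ofReal (Real.exp r) * ENNReal.ofReal (2 * Real.pi) ^ Module.finrank ℝ V :=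
        volume_mul_volume_le_iSup_fiberVolume_mul hK hK₀ centered hM hKM
    _ = _ := mul_assoc ..

lemma volume_le_setLIntegral_exp_section_mul {N : Set (W × V)} (hN : IsCompact N)
    (hN' : Convex ℝ N) (hN₀ : 0 ∈ interior N) (centered : ∫ p in N, p = 0) (ℓ : V →L[ℝ] ℝ) :
    volume N ≤ (∫⁻ y in Prod.mk 0 ⁻¹' N, ENNReal.ofReal (Real.exp (ℓ y))) *
      volume (Prod.fst '' N) := by
  obtain ⟨ξ, hξ⟩ := exists_setLIntegral_exp_interior_section_mul_le_indicator hN hN' hN₀ ℓ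
  set φ : W × V →L[ℝ] ℝ := ℓ.comp (.snd ℝ W V) - ξ.comp (.fst ℝ W V) with hφ
  have : IsFiniteMeasure (volume.restrict N) := isFiniteMeasure_restrict.2 hN.measure_lt_top.ne
  have integrable_id : IntegrableOn (fun p => p) N :=
    continuous_id.continuousOn.integrableOn_compact hN
  have φ_centered : ∫ p in N, φ p = 0 := by
    rw [φ.integral_comp_comm integrable_id, centered, map_zero]
  calc volume N = volume.restrict N univ := Measure.restrict_apply_univ _ |>.symm
    _ ≤ ∫⁻ p in N, ENNReal.ofReal (Real.exp (φ p)) :=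
        measure_univ_le_lintegral_exp (φ.integrable_comp integrable_id) φ_centered
    _ = ∫⁻ p in interior N, ENNReal.ofReal (Real.exp (φ p)) :=
        setLIntegral_congr (interior_ae_eq_of_null_frontier (hN'.addHaar_frontier
          (volume.prod volume))).symm
    _ = ∫⁻ w, (∫⁻ y in Prod.mk w ⁻¹' interior N, ENNReal.ofReal (Real.exp (ℓ y))) *
          ENNReal.ofReal (Real.exp (-ξ w)) := by
        rw [← setLIntegral_prod_mul isOpen_interior.measurableSet (by fun_prop) (by fun_prop)]
        simp [hφ, sub_eq_add_neg, Real.exp_add, ENNReal.ofReal_mul (Real.exp_pos _).le,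
          Measure.volume_eq_prod]
    _ ≤ ∫⁻ _ in Prod.fst '' N, (∫⁻ y in Prod.mk 0 ⁻¹' N, ENNReal.ofReal (Real.exp (ℓ y))) := by
        rw [← lintegral_indicator (hN.image continuous_fst).measurableSet]
        exact lintegral_mono hξ
    _ = _ := setLIntegral_const ..

lemma exists_volume_mul_setLIntegral_exp_inner_le {L : Set V} (hL : IsCompact L) (r : ℝ) :
    ∃ z, ∀ M : Set V, IsCompact M → (∀ x ∈ L, ∀ y ∈ M, ⟪x, y⟫ ≤ r) →
      volume L * (∫⁻ y in M, ENNReal.ofReal (Real.exp ⟪z, y⟫)) ≤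
        ENNReal.ofReal (Real.exp r) * ENNReal.ofReal (2 * Real.pi) ^ Module.finrank ℝ V := by
  obtain ⟨z, hz⟩ := hasSantaloCenters_inner V (L.indicator 1)
    (.indicator_one hL.measurableSet hL subset_rfl)
  refine ⟨z, fun M hM hLM => ?_⟩
  have polar : IsPolarPair (inner ℝ) (fun x => L.indicator 1 (z + x))
      (fun y => M.indicator 1 y * ENNReal.ofReal (Real.exp (⟪z, y⟫ - r))) := fun x y => by
    by_cases hx : z + x ∈ L
    · by_cases hy : y ∈ M
      · have := hLM _ hx y hy
        rw [inner_add_left] at this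
        simp only [indicator_of_mem hx, indicator_of_mem hy, Pi.one_apply, one_mul]
        gcongr
        linarith
      · simp [hy]
    · simp [hx]
  have := hz _ ((IsCompactDensity.indicator_one hM.measurableSet hM subset_rfl).mul_ofReal
    (by fun_prop)) polar
  have lintegral_eq : ∫⁻ y, M.indicator 1 y * ENNReal.ofReal (Real.exp (⟪z, y⟫ - r)) =
      (∫⁻ y in M, ENNReal.ofReal (Real.exp ⟪z, y⟫)) / ENNReal.ofReal (Real.exp r) := by
    rw [div_eq_mul_inv, ← lintegral_mul_const _ (by fun_prop),
      ← lintegral_indicator hM.measurableSet]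
    refine lintegral_congr fun y => ?_
    by_cases hy : y ∈ M <;>
      simp [hy, Real.exp_sub, div_eq_mul_inv, ENNReal.ofReal_mul (Real.exp_pos _).le,
        ENNReal.ofReal_inv_of_pos (Real.exp_pos r)]
  rwa [lintegral_indicator_one hL.measurableSet, lintegral_eq, ← mul_div_assoc,
    ENNReal.div_le_iff' (by simp [Real.exp_pos]) ENNReal.ofReal_ne_top] at this

lemma volume_mul_volume_section_le_of_centered {N : Set (W × V)} (hN : IsCompact N)
    (hN' : Convex ℝ N) (hN₀ : 0 ∈ interior N) (centered : ∫ p in N, p = 0) {L : Set V}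
    (hL : IsCompact L) (hLN : ∀ x ∈ L, ∀ y, (0, y) ∈ N → ⟪x, y⟫ ≤ r) (ht₀ : 0 ≤ t)
    (ht₁ : t ≤ 1) :
    volume L * volume (Prod.mk 0 ⁻¹' N) *
        ENNReal.ofReal (t ^ Module.finrank ℝ V * (1 - t) ^ Module.finrank ℝ W) ≤
      ENNReal.ofReal (Real.exp r) * ENNReal.ofReal (2 * Real.pi) ^ Module.finrank ℝ V := by
  set c := ENNReal.ofReal (t ^ Module.finrank ℝ V * (1 - t) ^ Module.finrank ℝ W)
  obtain ⟨z, hz⟩ := exists_volume_mul_setLIntegral_exp_inner_le hL r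
  set I := ∫⁻ y in Prod.mk 0 ⁻¹' N, ENNReal.ofReal (Real.exp ⟪z, y⟫)
  have shadow_ne_zero : volume (Prod.fst '' N) ≠ 0 :=
    (Measure.measure_pos_of_mem_nhds _
      (isOpenMap_fst.image_mem_nhds (mem_interior_iff_mem_nhds.1 hN₀))).ne'
  have section_le : volume (Prod.mk 0 ⁻¹' N) * c ≤ I := by
    rw [← ENNReal.mul_le_mul_iff_left shadow_ne_zero
      (hN.image continuous_fst).measure_lt_top.ne]
    have := measure_image_fst_mul_measure_preimage_mk_le volume volume hN hN' (t := 1 - t)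
      (sub_nonneg.2 ht₁) (sub_le_self 1 ht₀) 0
    rw [sub_sub_cancel, mul_comm ((1 - t) ^ _)] at this
    calc volume (Prod.mk 0 ⁻¹' N) * c * volume (Prod.fst '' N)
        = volume (Prod.fst '' N) * volume (Prod.mk 0 ⁻¹' N) * c := by ring
      _ ≤ volume N := this
      _ ≤ I * volume (Prod.fst '' N) :=
          volume_le_setLIntegral_exp_section_mul hN hN' hN₀ centered (innerSL ℝ z)
  calc volume L * volume (Prod.mk 0 ⁻¹' N) * c = volume L * (volume (Prod.mk 0 ⁻¹' N) * c) :=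
        mul_assoc ..
    _ ≤ volume L * I := by gcongr
    _ ≤ _ := hz _ (isCompact_preimage_mk hN 0) hLN

end ProjectionSection

section VolumeRadius

variable {V : Type*} [NormedAddCommGroup V] [InnerProductSpace ℝ V] [FiniteDimensional ℝ V]
  [MeasurableSpace V] [BorelSpace V]

lemma ofReal_two_div_sqrt_finrank_pow_le_volume_closedBall :
    ENNReal.ofReal ((2 / √(Module.finrank ℝ V)) ^ Module.finrank ℝ V) ≤
      volume (closedBall (0 : V) 1) := by
  -- The left-hand side is the volume of a cube inscribed in the ball.
  set k := Module.finrank ℝ V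
  set b := stdOrthonormalBasis ℝ V
  have measurePreserving_coords : MeasurePreserving fun x : V => (b.repr x).ofLp :=
    (PiLp.volume_preserving_ofLp (Fin k)).comp b.measurePreserving_repr
  have cube_subset : (fun x : V => (b.repr x).ofLp) ⁻¹' closedBall 0 (1 / √k) ⊆ closedBall 0 1 := by
    intro x hx
    rw [mem_preimage, mem_closedBall_zero_iff, pi_norm_le_iff_of_nonneg (by positivity)] at hx
    rw [mem_closedBall_zero_iff, ← b.repr.norm_map, EuclideanSpace.norm_eq, Real.sqrt_le_one]
    calc ∑ i, ‖b.repr x i‖ ^ 2 ≤ ∑ _i : Fin k, (1 / √k) ^ 2 := by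
          gcongr with i
          exact hx i
      _ ≤ 1 := by
          rw [Finset.sum_const, Finset.card_univ, Fintype.card_fin, nsmul_eq_mul, div_pow,
            Real.sq_sqrt k.cast_nonneg, one_pow, mul_one_div]
          exact div_self_le_one _
  calc ENNReal.ofReal ((2 / √k) ^ k) = volume (closedBall (0 : Fin k → ℝ) (1 / √k)) := by
        rw [Real.volume_pi_closedBall _ (by positivity), mul_one_div, Fintype.card_fin]
    _ = volume ((fun x : V => (b.repr x).ofLp) ⁻¹' closedBall 0 (1 / √k)) :=
        (measurePreserving_coords.measure_preimage
          measurableSet_closedBall.nullMeasurableSet).symm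
    _ ≤ volume (closedBall (0 : V) 1) := measure_mono cube_subset

lemma exp_neg_le_one_sub_div_pow {k : ℕ} (hk : 1 ≤ k) (m : ℕ) :
    Real.exp (-k) ≤ (1 - k / (k + m : ℝ)) ^ m := by
  rcases m.eq_zero_or_pos with rfl | hm
  · simp
  · have one_sub_eq : 1 - k / (k + m : ℝ) = (k / m + 1 : ℝ)⁻¹ := by field_simp; ring
    have exp_eq : Real.exp (-k) = (Real.exp (k / m))⁻¹ ^ m := by
      rw [← Real.exp_neg, ← Real.exp_nat_mul]
      field_simp
    rw [one_sub_eq, exp_eq]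
    gcongr
    exact Real.add_one_le_exp _

lemma exp_mul_two_pi_pow_le {k : ℕ} (hk : 1 ≤ k) (m : ℕ) :
    Real.exp k * (2 * Real.pi) ^ k ≤
      ((k + m : ℝ) / k * (Real.pi * Real.exp 1 ^ 2 / 2)) ^ k * (2 / √k) ^ k * (2 / √k) ^ k *
        ((k : ℝ) ^ k * ((k / (k + m : ℝ)) ^ k * (1 - k / (k + m : ℝ)) ^ m)) := by
  have exp_eq : Real.exp k = Real.exp 1 ^ k := by rw [← Real.exp_nat_mul, mul_one]
  calc Real.exp k * (2 * Real.pi) ^ k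
      = ((k + m : ℝ) / k * (Real.pi * Real.exp 1 ^ 2 / 2)) ^ k * (2 / √k) ^ k * (2 / √k) ^ k *
        ((k : ℝ) ^ k * ((k / (k + m : ℝ)) ^ k * Real.exp (-k))) := by
        rw [Real.exp_neg, exp_eq, ← inv_pow]
        simp only [← mul_pow]
        congr 1
        field_simp
        rw [Real.sq_sqrt k.cast_nonneg]
    _ ≤ _ := by
        gcongr
        exact exp_neg_le_one_sub_div_pow hk m

lemma volume_mul_volume_le_of_volume_mul_volume_smul_le {P Q : Set V} {k : ℕ} (hk : 1 ≤ k)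
    (hV : Module.finrank ℝ V = k) (m : ℕ)
    (hPQ : volume P * volume ((k : ℝ) • Q) *
        ENNReal.ofReal ((k / (k + m : ℝ)) ^ k * (1 - k / (k + m : ℝ)) ^ m) ≤
      ENNReal.ofReal (Real.exp k) * ENNReal.ofReal (2 * Real.pi) ^ k) :
    volume P * volume Q ≤ ENNReal.ofReal ((k + m : ℝ) / k * (Real.pi * Real.exp 1 ^ 2 / 2)) ^ k *
      volume (closedBall (0 : V) 1) * volume (closedBall (0 : V) 1) := by
  set q : ℝ := (k / (k + m : ℝ)) ^ k * (1 - k / (k + m : ℝ)) ^ m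
  have q_pos : 0 < (k : ℝ) ^ k * q := by
    have := (Real.exp_pos _).trans_le (exp_neg_le_one_sub_div_pow hk m)
    positivity
  have ball_ge := ofReal_two_div_sqrt_finrank_pow_le_volume_closedBall (V := V)
  rw [hV] at ball_ge
  refine (ENNReal.mul_le_mul_iff_left (ENNReal.ofReal_pos.2 q_pos).ne' ENNReal.ofReal_ne_top).1 ?_
  calc volume P * volume Q * ENNReal.ofReal ((k : ℝ) ^ k * q)
      = volume P * volume ((k : ℝ) • Q) * ENNReal.ofReal q := by
        rw [Measure.addHaar_smul, hV, abs_of_nonneg (by positivity),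
          ENNReal.ofReal_mul (by positivity)]
        ring
    _ ≤ ENNReal.ofReal (Real.exp k * (2 * Real.pi) ^ k) := by
        rwa [ENNReal.ofReal_mul (Real.exp_pos _).le, ENNReal.ofReal_pow Real.two_pi_pos.le]
    _ ≤ ENNReal.ofReal (((k + m : ℝ) / k * (Real.pi * Real.exp 1 ^ 2 / 2)) ^ k * (2 / √k) ^ k *
          (2 / √k) ^ k * ((k : ℝ) ^ k * q)) :=
        ENNReal.ofReal_le_ofReal (exp_mul_two_pi_pow_le hk m)
    _ ≤ _ := by
        rw [ENNReal.ofReal_mul (by positivity), ENNReal.ofReal_mul (by positivity),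
          ENNReal.ofReal_mul (by positivity), ENNReal.ofReal_pow (by positivity)]
        gcongr

variable {E : Type*} [NormedAddCommGroup E] [InnerProductSpace ℝ E] [FiniteDimensional ℝ E]
  {H : Submodule ℝ E} {k : ℕ}

lemma finrank_eq_add_finrank_orthogonal (hH : Module.finrank ℝ H = k) :
    (Module.finrank ℝ E : ℝ) = k + Module.finrank ℝ Hᗮ := by
  rw [← H.finrank_add_finrank_orthogonal, hH, Nat.cast_add]

variable [MeasurableSpace E] [BorelSpace E]

variable (H) in
lemma exists_measurePreserving_orthogonal_prod : ∃ e : E ≃L[ℝ] Hᗮ × H, MeasurePreserving e ∧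
    ∀ x, e x = (Hᗮ.orthogonalProjectionOnto x, H.orthogonalProjectionOnto x) :=
  ⟨(H.orthogonalDecomposition.toContinuousLinearEquiv.trans
      (WithLp.prodContinuousLinearEquiv 2 ℝ H Hᗮ)).trans (.prodComm ℝ H Hᗮ),
    Measure.measurePreserving_swap.comp
      ((WithLp.volume_preserving_ofLp H Hᗮ).comp H.orthogonalDecomposition.measurePreserving),
    fun x => by simp⟩

lemma setIntegral_image_eq_zero {F : Type*} [NormedAddCommGroup F] [NormedSpace ℝ F]
    [FiniteDimensional ℝ F] [MeasureSpace F] [BorelSpace F] {e : E ≃L[ℝ] F}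
    (he : MeasurePreserving e) {K : Set E} (hK : IsCompact K) (centered : ∫ x in K, x = 0) :
    ∫ p in e '' K, p = 0 := by
  have integral_eq := setIntegral_preimage_comp he (hK.image e.continuous).measurableSet
    stronglyMeasurable_id
  rw [preimage_image_eq _ e.injective] at integral_eq
  simp only [id_eq] at integral_eq
  rw [← integral_eq, e.integral_comp_comm, centered, map_zero]

lemma volume_image_orthogonalProjectionOnto_mul_volume_le_of_centered (hk : 1 ≤ k)
    (hH : Module.finrank ℝ H = k) {K : Set E} (hK : IsCompact K) (hK' : Convex ℝ K)
    (hK₀ : volume K ≠ 0) (centered : ∫ x in K, x = 0) {Q : Set H} (hQ : IsCompact Q)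
    (hKQ : ∀ x ∈ K, ∀ y ∈ Q, ⟪x, (y : E)⟫ ≤ 1) :
    volume (H.orthogonalProjectionOnto '' K) * volume Q ≤
      ENNReal.ofReal ((Module.finrank ℝ E : ℝ) / k * (Real.pi * Real.exp 1 ^ 2 / 2)) ^ k *
        volume (closedBall (0 : H) 1) * volume (closedBall (0 : H) 1) := by
  obtain ⟨e, he, e_apply⟩ := exists_measurePreserving_orthogonal_prod H
  have image_eq : Prod.snd '' (e '' K) = H.orthogonalProjectionOnto '' K := by
    simp only [image_image, e_apply]
  have volume_image : volume (e '' K) = volume K := by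
    rw [← he.measure_preimage (hK.image e.continuous).measurableSet.nullMeasurableSet,
      preimage_image_eq _ e.injective]
  have snd_centered : ∫ p in e '' K, p.2 = 0 := by
    have integrable_id : IntegrableOn (fun p => p) (e '' K) :=
      continuous_id.continuousOn.integrableOn_compact (hK.image e.continuous)
    rw [← snd_integral integrable_id, setIntegral_image_eq_zero he hK centered,
      Prod.snd_zero]
  have inner_le : ∀ p ∈ e '' K, ∀ y ∈ (k : ℝ) • Q, ⟪p.2, y⟫ ≤ k := by
    rintro _ ⟨x, hx, rfl⟩ _ ⟨y, hy, rfl⟩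
    simpa [e_apply, inner_smul_right] using
      mul_le_mul_of_nonneg_left (hKQ x hx y hy) k.cast_nonneg
  rw [finrank_eq_add_finrank_orthogonal hH]
  refine volume_mul_volume_le_of_volume_mul_volume_smul_le hk hH (Module.finrank ℝ Hᗮ) ?_
  have := volume_image_snd_mul_volume_le_of_centered (hK.image e.continuous)
    (hK'.is_linear_image e.isLinear) (volume_image.trans_ne hK₀) snd_centered (hQ.smul (k : ℝ))
    inner_le (t := k / (k + Module.finrank ℝ Hᗮ : ℝ)) (by positivity)
    (div_le_one_of_le₀ (by simp) (by positivity))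
  rwa [image_eq, hH] at this

lemma volume_mul_volume_preimage_coe_le_of_centered (hk : 1 ≤ k)
    (hH : Module.finrank ℝ H = k) {N : Set E} (hN : IsCompact N) (hN' : Convex ℝ N)
    (hN₀ : 0 ∈ interior N) (centered : ∫ x in N, x = 0) {P : Set H} (hP : IsCompact P)
    (hPN : ∀ x ∈ P, ∀ y : H, (y : E) ∈ N → ⟪x, y⟫ ≤ 1) :
    volume P * volume ((↑) ⁻¹' N : Set H) ≤
      ENNReal.ofReal ((Module.finrank ℝ E : ℝ) / k * (Real.pi * Real.exp 1 ^ 2 / 2)) ^ k *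
        volume (closedBall (0 : H) 1) * volume (closedBall (0 : H) 1) := by
  obtain ⟨e, he, e_apply⟩ := exists_measurePreserving_orthogonal_prod H
  have mem_image_iff (y : H) : (0, y) ∈ e '' N ↔ (y : E) ∈ N := by
    have e_coe : e y = (0, y) := by simp [e_apply]
    rw [← e_coe, e.injective.mem_set_image]
  have section_eq : Prod.mk 0 ⁻¹' (e '' N) = ((↑) ⁻¹' N : Set H) := Set.ext mem_image_iff
  have zero_mem : 0 ∈ interior (e '' N) :=
    e.toHomeomorph.isOpenMap.image_interior_subset N ⟨0, hN₀, map_zero e⟩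
  have inner_le : ∀ x ∈ (k : ℝ) • P, ∀ y, (0, y) ∈ e '' N → ⟪x, y⟫ ≤ k := by
    rintro _ ⟨x, hx, rfl⟩ y hy
    simpa [real_inner_smul_left] using
      mul_le_mul_of_nonneg_left (hPN x hx y ((mem_image_iff y).1 hy)) k.cast_nonneg
  rw [finrank_eq_add_finrank_orthogonal hH, mul_comm (volume P)]
  refine volume_mul_volume_le_of_volume_mul_volume_smul_le hk hH (Module.finrank ℝ Hᗮ) ?_
  have := volume_mul_volume_section_le_of_centered (hN.image e.continuous)
    (hN'.is_linear_image e.isLinear) zero_mem (setIntegral_image_eq_zero he hN centered)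
    (hP.smul (k : ℝ)) inner_le (t := k / (k + Module.finrank ℝ Hᗮ : ℝ)) (by positivity)
    (div_le_one_of_le₀ (by simp) (by positivity))
  rwa [section_eq, hH, mul_comm (volume _)] at this

end VolumeRadius

section PolarBody

variable {n k : ℕ} {K : Set (EuclideanSpace ℝ (Fin n))} {H : Submodule ℝ (EuclideanSpace ℝ (Fin n))}

lemma polarBody_eq_iInter (K : Set (EuclideanSpace ℝ (Fin n))) :
    polarBody K = ⋂ y ∈ K, {x | ⟪x, y⟫ ≤ 1} := by
  ext x
  simp [polarBody]

lemma isClosed_polarBody (K : Set (EuclideanSpace ℝ (Fin n))) : IsClosed (polarBody K) := by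
  rw [polarBody_eq_iInter]
  exact isClosed_biInter fun y _ => isClosed_le (by fun_prop) continuous_const

lemma convex_polarBody (K : Set (EuclideanSpace ℝ (Fin n))) : Convex ℝ (polarBody K) := by
  rw [polarBody_eq_iInter]
  exact convex_iInter₂ fun y _ => convex_halfSpace_le ((innerₗ _).flip y).isLinear 1

lemma isCompact_polarBody (hK : 0 ∈ interior K) : IsCompact (polarBody K) := by
  obtain ⟨r, hr, ball_subset⟩ := nhds_basis_closedBall.mem_iff.1 (mem_interior_iff_mem_nhds.1 hK)
  refine isCompact_of_isClosed_isBounded (isClosed_polarBody K)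
    (isBounded_closedBall.subset (fun x hx => ?_ : polarBody K ⊆ closedBall 0 r⁻¹))
  have smul_mem : (r / ‖x‖) • x ∈ K := ball_subset <| by
    rw [mem_closedBall_zero_iff, norm_smul, Real.norm_of_nonneg (by positivity), div_mul_eq_mul_div,
      mul_div_assoc]
    exact mul_le_of_le_one_right hr.le (div_self_le_one _)
  have inner_eq : ⟪x, (r / ‖x‖) • x⟫ = ‖x‖ * r := by
    rw [real_inner_smul_right, real_inner_self_eq_norm_sq]
    field_simp
  rw [mem_closedBall_zero_iff, ← one_div, le_div_iff₀ hr, ← inner_eq]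
  exact hx _ smul_mem

lemma zero_mem_interior_polarBody (hK : IsCompact K) : 0 ∈ interior (polarBody K) := by
  obtain ⟨R, hR, norm_le⟩ := hK.isBounded.exists_pos_norm_le
  refine mem_interior_iff_mem_nhds.2 (Filter.mem_of_superset (closedBall_mem_nhds 0 (inv_pos.2 hR))
    fun x hx y hy => ?_)
  calc ⟪x, y⟫ ≤ ‖x‖ * ‖y‖ := real_inner_le_norm x y
    _ ≤ R⁻¹ * R := by
        gcongr
        exacts [mem_closedBall_zero_iff.1 hx, norm_le y hy]
    _ = 1 := inv_mul_cancel₀ hR.ne'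

lemma vrad_image_coe (hH : Module.finrank ℝ H = k) (A : Set H) :
    vrad k H ((↑) '' A) = (volume A / volume (closedBall (0 : H) 1)) ^ (k : ℝ)⁻¹ := by
  have ball_eq : closedBall (0 : EuclideanSpace ℝ (Fin n)) 1 ∩ H = (↑) '' closedBall (0 : H) 1 := by
    ext x
    simp [and_comm]
  have volume_eq (B : Set H) : volume B = Measure.addHaarScalarFactor
      (volume : Measure (EuclideanSpace ℝ (Fin k))) μH[k] * μH[k] B := by
    rw [← InnerProductSpace.euclideanHausdorffMeasure_eq_volume, hH]
    rfl
  rw [vrad, ball_eq, isometry_subtype_coe.hausdorffMeasure_image (.inl k.cast_nonneg),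
    isometry_subtype_coe.hausdorffMeasure_image (.inl k.cast_nonneg), volume_eq, volume_eq,
    ENNReal.mul_div_mul_left _ _ (by
      exact_mod_cast Measure.addHaarScalarFactor_volume_hausdorffMeasure_ne_zero k)
      ENNReal.coe_ne_top]

lemma vrad_image_coe_mul_vrad_image_coe_le (hk : 1 ≤ k) (hH : Module.finrank ℝ H = k)
    {P Q : Set H} {c : ℝ≥0∞} (hPQ : volume P * volume Q ≤
      c ^ k * volume (closedBall (0 : H) 1) * volume (closedBall (0 : H) 1)) :
    vrad k H ((↑) '' P) * vrad k H ((↑) '' Q) ≤ c := by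
  rw [vrad_image_coe hH, vrad_image_coe hH, ← ENNReal.mul_rpow_of_nonneg _ _ (by positivity),
    ENNReal.rpow_inv_le_iff (by positivity), ENNReal.rpow_natCast]
  calc volume P / volume (closedBall (0 : H) 1) * (volume Q / volume (closedBall (0 : H) 1))
      = volume P * volume Q / volume (closedBall (0 : H) 1) / volume (closedBall (0 : H) 1) := by
        simp only [div_eq_mul_inv]
        ring
    _ ≤ c ^ k := ENNReal.div_le_of_le_mul (ENNReal.div_le_of_le_mul hPQ)

end PolarBody

theorem stmt2_general {n k : ℕ} (hk : 1 ≤ k) {K : Set (EuclideanSpace ℝ (Fin n))}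
    (hK : IsCompact K) (hK' : Convex ℝ K) (hK₀ : 0 ∈ interior K)
    (centered : ∫ x in K, x = 0 ∨ ∫ x in polarBody K, x = 0)
    {H : Submodule ℝ (EuclideanSpace ℝ (Fin n))} (hH : Module.finrank ℝ H = k) :
    vrad k H (projSet H K) * vrad k H (polarBody K ∩ H) ≤
      ENNReal.ofReal ((n : ℝ) / k * (Real.pi * Real.exp 1 ^ 2 / 2)) := by
  have proj_eq : projSet H K = (↑) '' (H.orthogonalProjectionOnto '' K) :=
    (image_image _ _ _).symm
  have section_eq : polarBody K ∩ H = (↑) '' ((↑) ⁻¹' polarBody K : Set H) := by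
    rw [inter_comm]
    exact (Subtype.image_preimage_coe _ _).symm
  have isCompact_polar := isCompact_polarBody hK₀
  rw [proj_eq, section_eq]
  refine vrad_image_coe_mul_vrad_image_coe_le hk hH ?_
  rcases centered with centered | centered
  · have volume_ne_zero : volume K ≠ 0 :=
      (Measure.measure_pos_of_mem_nhds _ (mem_interior_iff_mem_nhds.1 hK₀)).ne'
    have isCompact_section : IsCompact ((↑) ⁻¹' polarBody K : Set H) :=
      H.closed_of_finiteDimensional.isClosedEmbedding_subtypeVal.isCompact_preimage isCompact_polar
    simpa only [finrank_euclideanSpace_fin] using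
      volume_image_orthogonalProjectionOnto_mul_volume_le_of_centered hk hH hK hK' volume_ne_zero
        centered isCompact_section fun x hx y hy => (real_inner_comm _ _).trans_le (hy x hx)
  · have inner_le : ∀ x ∈ H.orthogonalProjectionOnto '' K, ∀ y : H,
        (y : EuclideanSpace ℝ (Fin n)) ∈ polarBody K → ⟪x, y⟫ ≤ 1 := by
      rintro _ ⟨x, hx, rfl⟩ y hy
      rw [real_inner_comm, H.inner_orthogonalProjectionOnto_eq_of_mem_left]
      exact hy x hx
    simpa only [finrank_euclideanSpace_fin] using
      volume_mul_volume_preimage_coe_le_of_centered hk hH isCompact_polar (convex_polarBody K)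
        (zero_mem_interior_polarBody hK) centered
        (hK.image H.orthogonalProjectionOnto.continuous) inner_le

/-- Theorem (Blaschke–Santaló type inequality for projections and sections):
`vrad(P_H(K)) · vrad(K° ∩ H) ≤ (n/k)·C·(log n)³`. -/
theorem stmt2 :
    ∃ C : ℝ, 0 < C ∧ ∀ (n : ℕ), 2 ≤ n →
      ∀ K : Set (EuclideanSpace ℝ (Fin n)),
        IsCompact K → Convex ℝ K → (0 : EuclideanSpace ℝ (Fin n)) ∈ interior K →
        ((∫ x in K, x) = 0 ∨ (∫ x in polarBody K, x) = 0) →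
        ∀ k : ℕ, 1 ≤ k → k ≤ n - 1 →
          ∀ H : Submodule ℝ (EuclideanSpace ℝ (Fin n)), Module.finrank ℝ H = k →
            vrad k H (projSet H K) * vrad k H (polarBody K ∩ (H : Set _)) ≤
              ENNReal.ofReal (((n : ℝ) / k) * C * (Real.log n) ^ 3) := by
  refine ⟨Real.pi * Real.exp 1 ^ 2 / 2 / Real.log 2 ^ 3, by positivity, ?_⟩
  intro n hn K hK hK' hK₀ centered k hk _ H hH
  have log_two_le : Real.log 2 ≤ Real.log n := Real.log_le_log two_pos (by exact_mod_cast hn)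
  refine (stmt2_general hk hK hK' hK₀ centered hH).trans (ENNReal.ofReal_le_ofReal ?_)
  rw [mul_assoc]
  gcongr
  rw [div_mul_eq_mul_div, le_div_iff₀ (by positivity)]
  gcongr
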